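/- arXiv:2205.11904 — 3 statements merged into one kernel-verified Lean document; each statement's English description precedes it below -/
import Mathlib

section
/- Let (X,T) be a topological dynamical system with T a homeomorphism satisfying the marker property, and let d be a compatible metric with mdim(X,T) = mdim_M^+(T,X,d). Then mdim_M^-(T,X,d) = mdim_M^+(T,X,d) = sup_{μ∈M(X,T)} liminf_{ε→0} (1/log(1/ε)) inf_{diam P≤ε} h_μ(T,P) = sup_{μ∈M(X,T)} limsup_{ε→0} (1/log(1/ε)) inf_{diam P≤ε} h_μ(T,P) = liminf_{ε→0} sup_{μ∈M(X,T)} (1/log(1/ε)) inf_{diam P≤ε} h_μ(T,P) = limsup_{ε→0} sup_{μ∈M(X,T)} (1/log(1/ε)) inf_{diam P≤ε} h_μ(T,P), where the infima are over finite Borel partitions P of X with d-diameter at most ε. -/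
open Filter MeasureTheory Set
open scoped ENNReal Topology

noncomputable section

namespace MMD

variable {X : Type*}

/-- The `n`-th Bowen metric `d_n(x,y) = max_{0 ≤ j ≤ n-1} d(T^j x, T^j y)`. -/
noncomputable def bowenDist [PseudoMetricSpace X] (T : X → X) (n : ℕ) (x y : X) : ℝ :=
  ⨆ j : Fin n, dist (T^[(j : ℕ)] x) (T^[(j : ℕ)] y)

/-- `r_n(T,d,ε,Z)`: minimal cardinality of an `(n,ε)`-spanning set of `Z`. -/
noncomputable def spanNum [PseudoMetricSpace X] (T : X → X) (n : ℕ) (ε : ℝ) (Z : Set X) : ℕ :=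
  sInf {k | ∃ E : Finset X, E.card = k ∧ ∀ z ∈ Z, ∃ y ∈ E, bowenDist T n z y < ε}

/-- `s_n(T,d,ε,Z)`: maximal cardinality of an `(n,ε)`-separated subset of `Z`. -/
noncomputable def sepNum [PseudoMetricSpace X] (T : X → X) (n : ℕ) (ε : ℝ) (Z : Set X) : ℕ :=
  sSup {k | ∃ F : Finset X, ↑F ⊆ Z ∧ F.card = k ∧
    ∀ x ∈ F, ∀ y ∈ F, x ≠ y → ε ≤ bowenDist T n x y}

/-- `limsup_{n→∞} (1/n) log r_n(T,d,ε,X)`. -/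
noncomputable def spanGrowth [PseudoMetricSpace X] (T : X → X) (ε : ℝ) : ℝ≥0∞ :=
  Filter.limsup (fun n : ℕ => ENNReal.ofReal (Real.log (spanNum T n ε Set.univ)) / (n : ℝ≥0∞))
    Filter.atTop

/-- Upper metric mean dimension. -/
noncomputable def mdimMUpper [PseudoMetricSpace X] (T : X → X) : ℝ≥0∞ :=
  Filter.limsup (fun ε : ℝ => spanGrowth T ε / ENNReal.ofReal (Real.log (1 / ε)))
    (nhdsWithin 0 (Set.Ioi 0))

/-- Lower metric mean dimension. -/
noncomputable def mdimMLower [PseudoMetricSpace X] (T : X → X) : ℝ≥0∞ :=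
  Filter.liminf (fun ε : ℝ => spanGrowth T ε / ENNReal.ofReal (Real.log (1 / ε)))
    (nhdsWithin 0 (Set.Ioi 0))

/-- A finite (Borel) partition given as a finite set of measurable, pairwise disjoint sets
covering the space. -/
def IsFinPartition {Y : Type*} [MeasurableSpace Y] (P : Finset (Set Y)) : Prop :=
  (∀ s ∈ P, MeasurableSet s) ∧ (∀ s ∈ P, ∀ t ∈ P, s ≠ t → Disjoint s t) ∧
    ⋃₀ (P : Set (Set Y)) = Set.univ

/-- Mutual information `I(ξ;η)` of two random variables, as the supremum over finite
measurable partitions of the target spaces. -/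
noncomputable def mutualInfo {Ω A B : Type*} [MeasurableSpace Ω] [MeasurableSpace A]
    [MeasurableSpace B] (P : Measure Ω) (ξ : Ω → A) (η : Ω → B) : ℝ≥0∞ :=
  ⨆ (p : Finset (Set A)) (_ : IsFinPartition p) (q : Finset (Set B)) (_ : IsFinPartition q),
    ENNReal.ofReal (∑ s ∈ p, ∑ t ∈ q,
      (P (ξ ⁻¹' s ∩ η ⁻¹' t)).toReal *
        Real.log ((P (ξ ⁻¹' s ∩ η ⁻¹' t)).toReal /
          ((P (ξ ⁻¹' s)).toReal * (P (η ⁻¹' t)).toReal)))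

/-- The `L^∞` rate distortion function `R_{μ,L∞}(ε,s)`: the infimum of `I(ξ;η)/n` over all
`n ≥ 1` and all joint distributions `ν` of `(ξ, (η_0,…,η_{n-1}))` such that `ξ` has law `μ`,
the `η_k` take (almost surely) finitely many values, and
`E(#{0 ≤ k ≤ n-1 : d(T^k ξ, η_k) ≥ ε}) < s n`. -/
noncomputable def RDistLInftyS [PseudoMetricSpace X] [MeasurableSpace X] (T : X → X)
    (μ : Measure X) (ε s : ℝ) : ℝ≥0∞ :=
  ⨅ (n : ℕ) (_ : 0 < n) (ν : Measure (X × (Fin n → X))) (_ : IsProbabilityMeasure ν)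
    (_ : ν.map Prod.fst = μ) (_ : ∃ S : Finset X, ν {p | ∀ k, p.2 k ∈ S} = 1)
    (_ : ∫⁻ p, (Nat.card {k : Fin n // ε ≤ dist (T^[(k : ℕ)] p.1) (p.2 k)} : ℝ≥0∞) ∂ν
        < ENNReal.ofReal (s * n)),
    mutualInfo ν Prod.fst Prod.snd / (n : ℝ≥0∞)

/-- `R_{μ,L∞}(ε) = lim_{s→0} R_{μ,L∞}(ε,s)` (the limit equals the supremum over `s > 0`
by monotonicity). -/
noncomputable def RDistLInfty [PseudoMetricSpace X] [MeasurableSpace X] (T : X → X)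
    (μ : Measure X) (ε : ℝ) : ℝ≥0∞ :=
  ⨆ (s : ℝ) (_ : 0 < s), RDistLInftyS T μ ε s

/-- The `L¹` rate distortion function `R_{μ,1}(ε)`. -/
noncomputable def RDistL1 [PseudoMetricSpace X] [MeasurableSpace X] (T : X → X)
    (μ : Measure X) (ε : ℝ) : ℝ≥0∞ :=
  ⨅ (n : ℕ) (_ : 0 < n) (ν : Measure (X × (Fin n → X))) (_ : IsProbabilityMeasure ν)
    (_ : ν.map Prod.fst = μ) (_ : ∃ S : Finset X, ν {p | ∀ k, p.2 k ∈ S} = 1)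
    (_ : ∫⁻ p, ∑ k : Fin n, ENNReal.ofReal (dist (T^[(k : ℕ)] p.1) (p.2 k)) ∂ν
        < ENNReal.ofReal (ε * n)),
    mutualInfo ν Prod.fst Prod.snd / (n : ℝ≥0∞)

/-- `R^δ_μ(T,n,ε)`: minimal number of Bowen `(n,ε)`-balls whose union has `μ`-measure
greater than `1 - δ`. -/
noncomputable def katokNum [PseudoMetricSpace X] [MeasurableSpace X] (T : X → X)
    (μ : Measure X) (n : ℕ) (ε δ : ℝ) : ℕ :=
  sInf {k | ∃ E : Finset X, E.card = k ∧
    ENNReal.ofReal (1 - δ) < μ (⋃ x ∈ E, {y | bowenDist T n x y < ε})}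

/-- `h̄^K_μ(T,ε,δ)`. -/
noncomputable def katokUpperD [PseudoMetricSpace X] [MeasurableSpace X] (T : X → X)
    (μ : Measure X) (ε δ : ℝ) : ℝ≥0∞ :=
  Filter.limsup (fun n : ℕ => ENNReal.ofReal (Real.log (katokNum T μ n ε δ)) / (n : ℝ≥0∞))
    Filter.atTop

/-- `ḥ^K_μ(T,ε,δ)`. -/
noncomputable def katokLowerD [PseudoMetricSpace X] [MeasurableSpace X] (T : X → X)
    (μ : Measure X) (ε δ : ℝ) : ℝ≥0∞ :=
  Filter.liminf (fun n : ℕ => ENNReal.ofReal (Real.log (katokNum T μ n ε δ)) / (n : ℝ≥0∞))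
    Filter.atTop

/-- `h̄^K_μ(T,ε) = lim_{δ→0} h̄^K_μ(T,ε,δ)` (equal to the supremum over `δ ∈ (0,1)` by
monotonicity). -/
noncomputable def katokUpper [PseudoMetricSpace X] [MeasurableSpace X] (T : X → X)
    (μ : Measure X) (ε : ℝ) : ℝ≥0∞ :=
  ⨆ (δ : ℝ) (_ : δ ∈ Set.Ioo (0 : ℝ) 1), katokUpperD T μ ε δ

/-- `ḥ^K_μ(T,ε) = lim_{δ→0} ḥ^K_μ(T,ε,δ)`. -/
noncomputable def katokLower [PseudoMetricSpace X] [MeasurableSpace X] (T : X → X)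
    (μ : Measure X) (ε : ℝ) : ℝ≥0∞ :=
  ⨆ (δ : ℝ) (_ : δ ∈ Set.Ioo (0 : ℝ) 1), katokLowerD T μ ε δ

/-- The empirical measure `(1/n) Σ_{j=0}^{n-1} δ_{T^j x}`. -/
noncomputable def empMeas [MeasurableSpace X] (T : X → X) (n : ℕ) (x : X) : Measure X :=
  (n : ℝ≥0∞)⁻¹ • ∑ j ∈ Finset.range n, Measure.dirac (T^[j] x)

/-- Pfister–Sullivan entropy `PS_μ(T,d,ε)`: infimum over weak* open neighborhoods `F` of `μ`
of `limsup_n (1/n) log s_n(T,d,ε,X_{n,F})`, where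
`X_{n,F} = {x : (1/n) Σ_{j<n} δ_{T^j x} ∈ F}`. -/
noncomputable def PSent [MetricSpace X] [MeasurableSpace X] [OpensMeasurableSpace X]
    (T : X → X) (μ : ProbabilityMeasure X) (ε : ℝ) : ℝ≥0∞ :=
  ⨅ (F : Set (ProbabilityMeasure X)) (_ : IsOpen F) (_ : μ ∈ F),
    Filter.limsup (fun n : ℕ => ENNReal.ofReal (Real.log (sepNum T n ε
      {x : X | ∃ h : IsProbabilityMeasure (empMeas T n x),
        (⟨empMeas T n x, h⟩ : ProbabilityMeasure X) ∈ F})) / (n : ℝ≥0∞)) Filter.atTop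

/-- Partition entropy `H_μ(P) = Σ_{A∈P} -μ(A) log μ(A)`. -/
noncomputable def entP [MeasurableSpace X] (μ : Measure X) (P : Finset (Set X)) : ℝ≥0∞ :=
  ∑ A ∈ P, ENNReal.ofReal (-((μ A).toReal * Real.log ((μ A).toReal)))

/-- The join `P^n = ∨_{j=0}^{n-1} T^{-j} P`. -/
noncomputable def joinN (T : X → X) (P : Finset (Set X)) (n : ℕ) : Finset (Set X) :=
  letI : DecidableEq (Set X) := Classical.decEq _
  (Fintype.piFinset (fun _ : Fin n => P)).image (fun f => ⋂ j : Fin n, T^[(j : ℕ)] ⁻¹' f j)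

/-- `h_μ(T,P) = lim_n H_μ(P^n)/n` (the limit exists and equals the liminf). -/
noncomputable def entRate [MeasurableSpace X] (T : X → X) (μ : Measure X)
    (P : Finset (Set X)) : ℝ≥0∞ :=
  Filter.liminf (fun n : ℕ => entP μ (joinN T P n) / (n : ℝ≥0∞)) Filter.atTop

/-- `inf { h_μ(T,P) : P a finite Borel partition with diam P ≤ ε }`. -/
noncomputable def infEntRate [PseudoMetricSpace X] [MeasurableSpace X] (T : X → X)
    (μ : Measure X) (ε : ℝ) : ℝ≥0∞ :=
  ⨅ (P : Finset (Set X)) (_ : IsFinPartition P) (_ : ∀ s ∈ P, Metric.diam s ≤ ε),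
    entRate T μ P

/-- Kolmogorov–Sinai entropy `h_μ(T)`. -/
noncomputable def ksEntropy [MeasurableSpace X] (T : X → X) (μ : Measure X) : ℝ≥0∞ :=
  ⨆ (P : Finset (Set X)) (_ : IsFinPartition P), entRate T μ P

/-- A finite open cover. -/
def IsFinOpenCover [TopologicalSpace X] (α : Finset (Set X)) : Prop :=
  (∀ A ∈ α, IsOpen A) ∧ ⋃₀ (α : Set (Set X)) = Set.univ

/-- `ord(β) = max_x #{B ∈ β : x ∈ B} - 1`. -/
noncomputable def ordCover (β : Finset (Set X)) : ℕ :=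
  sSup {k | ∃ x : X, Nat.card {B : Set X // B ∈ β ∧ x ∈ B} = k} - 1

/-- `D(α) = min_{β ≻ α} ord(β)`, over finite open covers `β` refining `α`. -/
noncomputable def Dcover [TopologicalSpace X] (α : Finset (Set X)) : ℕ :=
  sInf {k | ∃ β : Finset (Set X), IsFinOpenCover β ∧ (∀ B ∈ β, ∃ A ∈ α, B ⊆ A) ∧
    ordCover β = k}

/-- Mean (topological) dimension `mdim(X,T) = sup_α lim_n D(α^n)/n`. -/
noncomputable def mdimTop [TopologicalSpace X] (T : X → X) : ℝ≥0∞ :=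
  ⨆ (α : Finset (Set X)) (_ : IsFinOpenCover α),
    Filter.liminf (fun n : ℕ => (Dcover (joinN T α n) : ℝ≥0∞) / (n : ℝ≥0∞)) Filter.atTop

/-- The marker property for a homeomorphism. -/
def MarkerProperty [TopologicalSpace X] (T : X ≃ₜ X) : Prop :=
  ∀ N : ℕ, 0 < N → ∃ U : Set X, IsOpen U ∧
    (∀ n : ℕ, 1 ≤ n → n ≤ N → U ∩ (⇑T)^[n] '' U = ∅) ∧
    ⋃ n : ℤ, ⇑(T.toEquiv ^ n) '' U = Set.univ

/-- Upper dimension `limsup_{ε→0} F(μ,ε)/log(1/ε)` associated with a candidate `F`. -/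
noncomputable def dimFUpper [MeasurableSpace X] (F : Measure X → ℝ → ℝ≥0∞)
    (μ : Measure X) : ℝ≥0∞ :=
  Filter.limsup (fun ε : ℝ => F μ ε / ENNReal.ofReal (Real.log (1 / ε)))
    (nhdsWithin 0 (Set.Ioi 0))

/-- Lower dimension `liminf_{ε→0} F(μ,ε)/log(1/ε)` associated with a candidate `F`. -/
noncomputable def dimFLower [MeasurableSpace X] (F : Measure X → ℝ → ℝ≥0∞)
    (μ : Measure X) : ℝ≥0∞ :=
  Filter.liminf (fun ε : ℝ => F μ ε / ENNReal.ofReal (Real.log (1 / ε)))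
    (nhdsWithin 0 (Set.Ioi 0))

/-- A candidate function: for each invariant probability measure `μ`, `F(μ,·)` is
non-decreasing as `ε` decreases, and `F(μ,ε) → h_μ(T)` as `ε → 0⁺`. -/
def IsCandidate [MeasurableSpace X] (T : X → X) (F : Measure X → ℝ → ℝ≥0∞) : Prop :=
  ∀ μ : Measure X, IsProbabilityMeasure μ → MeasurePreserving T μ μ →
    (∀ ε₁ ε₂ : ℝ, 0 < ε₁ → ε₁ ≤ ε₂ → F μ ε₂ ≤ F μ ε₁) ∧
    Filter.Tendsto (F μ) (nhdsWithin 0 (Set.Ioi 0)) (nhds (ksEntropy T μ))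

end MMD

open MMD

theorem aux_chain {I : Type*} [Fintype I] [DecidableEq I] (t : I → ℝ)
    (ht1 : ∀ i, t i ≤ 1) (F : Finset (Finset I))
    (hF : ∀ σ ∈ F, (∀ i ∈ σ, ∀ j ∉ σ, t j < t i) ∧ (∀ i ∈ σ, 0 < t i) ∧ (∀ j ∉ σ, t j < 1)) :
    F.card ≤ (Finset.univ.filter (fun i => 0 < t i ∧ t i < 1)).card + 1 := by
  classical
  set Z : Finset I := Finset.univ.filter (fun i => t i = 1) with hZ
  set Y : Finset I := Finset.univ.filter (fun i => 0 < t i ∧ t i < 1) with hY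
  have hinj : Set.InjOn (fun σ : Finset I => σ.card) (F : Set (Finset I)) := by
    intro σ hσ τ hτ h
    have h1 := hF σ hσ
    have h2 := hF τ hτ
    by_cases hst : σ ⊆ τ
    · exact Finset.eq_of_subset_of_card_le hst (le_of_eq h.symm)
    · by_cases hts : τ ⊆ σ
      · exact (Finset.eq_of_subset_of_card_le hts (le_of_eq h)).symm
      · obtain ⟨i, hi, hi'⟩ := Finset.not_subset.1 hst
        obtain ⟨j, hj, hj'⟩ := Finset.not_subset.1 hts
        exact absurd (h1.1 i hi j hj') (not_lt.2 (h2.1 j hj i hi').le)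
  have hmap : ∀ σ ∈ F, σ.card ∈ Finset.Icc Z.card (Z.card + Y.card) := by
    intro σ hσ
    have h1 := hF σ hσ
    rw [Finset.mem_Icc]
    constructor
    · apply Finset.card_le_card
      intro i hi
      by_contra hn
      have := h1.2.2 i hn
      simp [hZ] at hi
      linarith
    · refine le_trans (Finset.card_le_card (t := Z ∪ Y) ?_) (Finset.card_union_le _ _)
      intro i hi
      have := h1.2.1 i hi
      rcases (ht1 i).lt_or_eq with h | h
      · simp [hY, hZ, this, h]
      · simp [hZ, h]
  have := Finset.card_le_card_of_injOn (fun σ : Finset I => σ.card) hmap hinj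
  simp at this
  omega

theorem aux_cover {X : Type*} [TopologicalSpace X] (T : X → X) (hT : Continuous T)
    (α : Finset (Set X)) (n M k : ℕ) (f : α → X → ℝ) (hfc : ∀ A, Continuous (f A))
    (hf1 : ∀ x, ∃ A, f A x = 1) (hfp : ∀ A x, 0 < f A x → x ∈ (A : Set X))
    (a : α × Fin n → Fin M)
    (hk : ∀ x, (Finset.univ.filter (fun i : α × Fin n =>
      ((a i : ℕ) : ℝ) < M * f i.1 (T^[(i.2 : ℕ)] x) ∧
      M * f i.1 (T^[(i.2 : ℕ)] x) < (a i : ℕ) + 1)).card < k) :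
    Dcover (joinN T α n) < k ∨ k = 0 := by
  classical
  by_cases hk0 : k = 0
  · exact Or.inr hk0
  left
  set t : α × Fin n → X → ℝ := fun i x =>
    max 0 (min 1 (M * f i.1 (T^[(i.2 : ℕ)] x) - (a i : ℕ))) with htdef
  have htc : ∀ i, Continuous (t i) := by
    intro i
    have h1 : Continuous (T^[(i.2 : ℕ)]) := hT.iterate _
    have h2 := (hfc i.1).comp h1
    exact continuous_const.max (continuous_const.min ((continuous_const.mul h2).sub continuous_const))
  have ht0 : ∀ i x, 0 ≤ t i x := fun i x => le_max_left _ _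
  have ht1 : ∀ i x, t i x ≤ 1 := fun i x => max_le zero_le_one (min_le_left _ _)
  have htpos : ∀ i x, 0 < t i x → ((a i : ℕ) : ℝ) < M * f i.1 (T^[(i.2 : ℕ)] x) := by
    intro i x h
    rcases lt_max_iff.1 h with h | h
    · exact absurd h (lt_irrefl _)
    · have := (lt_min_iff.1 h).2
      linarith
  have htlt : ∀ i x, t i x < 1 → M * f i.1 (T^[(i.2 : ℕ)] x) < (a i : ℕ) + 1 := by
    intro i x h
    have h' := (max_lt_iff.1 h).2
    rcases min_lt_iff.1 h' with h | h
    · exact absurd h (lt_irrefl _)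
    · linarith
  have htA : ∀ i x, 0 < t i x → T^[(i.2 : ℕ)] x ∈ (i.1 : Set X) := by
    intro i x h
    apply hfp
    have h1 := htpos i x h
    have h2 : (0 : ℝ) ≤ (a i : ℕ) := Nat.cast_nonneg _
    by_contra hn
    have h3 : (M : ℝ) * f i.1 (T^[(i.2 : ℕ)] x) ≤ 0 :=
      mul_nonpos_of_nonneg_of_nonpos (Nat.cast_nonneg _) (not_lt.1 hn)
    linarith
  have htone : ∀ i x, f i.1 (T^[(i.2 : ℕ)] x) = 1 → t i x = 1 := by
    intro i x h
    have h1 : ((a i : ℕ) : ℝ) + 1 ≤ M := by exact_mod_cast (a i).2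
    apply le_antisymm (ht1 i x)
    apply le_max_of_le_right
    apply le_min le_rfl
    rw [h]; linarith
  set W : Finset (α × Fin n) → Set X := fun σ => {x | (∀ i ∈ σ, ∀ j ∉ σ, t j x < t i x) ∧
    (∀ i ∈ σ, 0 < t i x) ∧ (∀ j ∉ σ, t j x < 1)} with hW
  have hWo : ∀ σ, IsOpen (W σ) := by
    intro σ
    have e : W σ = (⋂ i ∈ σ, ⋂ j ∈ (σᶜ : Finset _), {x | t j x < t i x}) ∩
      ((⋂ i ∈ σ, {x | 0 < t i x}) ∩ (⋂ j ∈ (σᶜ : Finset _), {x | t j x < 1})) := by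
      ext x; simp [hW]
    rw [e]
    refine IsOpen.inter ?_ (IsOpen.inter ?_ ?_)
    · exact isOpen_biInter_finset fun i _ => isOpen_biInter_finset fun j _ =>
        isOpen_lt (htc j) (htc i)
    · exact isOpen_biInter_finset fun i _ => isOpen_lt continuous_const (htc i)
    · exact isOpen_biInter_finset fun i _ => isOpen_lt (htc i) continuous_const
  set β : Finset (Set X) := (Finset.univ.filter (fun σ => (W σ).Nonempty)).image W with hβ
  have hcov : IsFinOpenCover β := by
    constructor
    · intro A hA
      obtain ⟨σ, _, rfl⟩ := Finset.mem_image.1 hA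
      exact hWo σ
    · rw [Set.eq_univ_iff_forall]
      intro x
      have hx : x ∈ W (Finset.univ.filter (fun i => 0 < t i x)) := by
        refine ⟨?_, ?_, ?_⟩
        · intro i hi j hj
          simp at hi hj
          linarith
        · intro i hi; simpa using hi
        · intro j hj; simp at hj; linarith
      refine ⟨_, ?_, hx⟩
      simp only [hβ, Finset.coe_image]
      refine ⟨_, ?_, rfl⟩
      simp only [Finset.coe_filter, Finset.mem_univ, true_and]
      exact ⟨x, hx⟩
  have href : ∀ B ∈ β, ∃ A ∈ joinN T α n, B ⊆ A := by
    intro B hB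
    obtain ⟨σ, hσ, rfl⟩ := Finset.mem_image.1 hB
    obtain ⟨x, hx⟩ := (Finset.mem_filter.1 hσ).2
    have : ∀ j : Fin n, ∃ A : α, (A, j) ∈ σ := by
      intro j
      obtain ⟨A, hA⟩ := hf1 (T^[(j : ℕ)] x)
      refine ⟨A, ?_⟩
      by_contra hn
      have h1 := hx.2.2 _ hn
      have h2 := htone (A, j) x hA
      linarith
    choose g hg using this
    refine ⟨⋂ j : Fin n, T^[(j : ℕ)] ⁻¹' (g j : Set X), ?_, ?_⟩
    · unfold joinN
      rw [Finset.mem_image]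
      refine ⟨fun j => (g j : Set X), ?_, rfl⟩
      rw [Fintype.mem_piFinset]
      intro j; exact (g j).2
    · intro y hy
      rw [Set.mem_iInter]
      intro j
      exact htA (g j, j) y (hy.2.1 _ (hg j))
  have hord : ordCover β ≤ k - 1 := by
    unfold ordCover
    apply Nat.sub_le_sub_right
    apply csSup_le'
    rintro c ⟨x, rfl⟩
    have h1 : Nat.card {B : Set X // B ∈ β ∧ x ∈ B} ≤
        (Finset.univ.filter (fun σ => x ∈ W σ)).card := by
      have : Nat.card {B : Set X // B ∈ β ∧ x ∈ B} =
          (β.filter (fun B => x ∈ B)).card := by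
        exact Nat.subtype_card _ (by simp)
      rw [this]
      refine le_trans (Finset.card_le_card (t := (Finset.univ.filter (fun σ => x ∈ W σ)).image W) ?_)
        Finset.card_image_le
      intro B hB
      obtain ⟨hB, hxB⟩ := Finset.mem_filter.1 hB
      obtain ⟨σ, hσ, rfl⟩ := Finset.mem_image.1 hB
      exact Finset.mem_image.2 ⟨σ, by simpa using hxB, rfl⟩
    have h2 := aux_chain (fun i => t i x) (fun i => ht1 i x)
      (Finset.univ.filter (fun σ => x ∈ W σ)) (by
        intro σ hσ
        exact (Finset.mem_filter.1 hσ).2)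
    have h3 := hk x
    have h4 : (Finset.univ.filter (fun i => 0 < t i x ∧ t i x < 1)).card ≤
      (Finset.univ.filter (fun i : α × Fin n =>
      ((a i : ℕ) : ℝ) < M * f i.1 (T^[(i.2 : ℕ)] x) ∧
      M * f i.1 (T^[(i.2 : ℕ)] x) < (a i : ℕ) + 1)).card := by
      apply Finset.card_le_card
      intro i hi
      have := (Finset.mem_filter.1 hi).2
      exact Finset.mem_filter.2 ⟨Finset.mem_univ _, htpos i x this.1, htlt i x this.2⟩
    omega
  have : Dcover (joinN T α n) ≤ ordCover β := Nat.sInf_le ⟨β, hcov, href, rfl⟩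
  omega

theorem aux_lip {X : Type*} [MetricSpace X] [CompactSpace X] (α : Finset (Set X))
    (hα : IsFinOpenCover α) :
    ∃ (L : ℝ) (f : α → X → ℝ), 0 < L ∧ (∀ A, Continuous (f A)) ∧ (∀ x, ∃ A, f A x = 1) ∧
      (∀ A x, 0 < f A x → x ∈ (A : Set X)) ∧ (∀ A x y, |f A x - f A y| ≤ L * dist x y) := by
  classical
  obtain ⟨δ, hδ, hleb⟩ := lebesgue_number_lemma_of_metric_sUnion (isCompact_univ (X := X))
    (c := (α : Set (Set X))) (fun t ht => hα.1 t ht) (by rw [hα.2])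
  refine ⟨1 / δ, fun A x => if (A : Set X) = univ then 1 else
    min 1 (Metric.infDist x (A : Set X)ᶜ / δ), by positivity, ?_, ?_, ?_, ?_⟩
  · intro A
    by_cases h : (A : Set X) = univ
    · simp only [h, if_true]; exact continuous_const
    · simp only [h, if_false]
      exact continuous_const.min ((Metric.continuous_infDist_pt _).div_const _)
  · intro x
    obtain ⟨A, hA, hb⟩ := hleb x (mem_univ x)
    refine ⟨⟨A, hA⟩, ?_⟩
    by_cases h : A = univ
    · simp [h]
    · simp only [h, if_false]
      apply min_eq_left
      rw [le_div_iff₀ hδ, one_mul]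
      have hne : (Aᶜ : Set X).Nonempty := by
        rw [Set.nonempty_compl]; exact h
      rw [Metric.le_infDist hne]
      intro y hy
      by_contra hlt
      exact hy (hb (by rw [Metric.mem_ball, dist_comm]; exact not_le.1 hlt))
  · intro A x hx
    by_cases h : (A : Set X) = univ
    · rw [h]; exact mem_univ x
    · simp only [h, if_false] at hx
      by_contra hn
      have : Metric.infDist x (A : Set X)ᶜ = 0 := Metric.infDist_zero_of_mem hn
      rw [this] at hx
      simp at hx
  · intro A x y
    by_cases h : (A : Set X) = univ
    · simp only [h, if_true]; simp; positivity
    · simp only [h, if_false]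
      refine le_trans (abs_min_sub_min_le_max _ _ _ _) ?_
      have h1 : |Metric.infDist x (A : Set X)ᶜ - Metric.infDist y (A : Set X)ᶜ| ≤ dist x y := by
        have := (Metric.lipschitz_infDist_pt ((A : Set X)ᶜ)).dist_le_mul x y
        simpa [Real.dist_eq] using this
      rw [← sub_div, abs_div, abs_of_pos hδ]
      simp only [sub_self, abs_zero]
      apply max_le (by positivity)
      rw [div_eq_inv_mul, one_div]
      exact mul_le_mul_of_nonneg_left h1 (by positivity)

theorem aux_window (M : ℕ) (w : ℝ) (hw : 0 ≤ w) (V : Finset (Fin M))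
    (hV : ∀ v ∈ V, ∀ v' ∈ V, ((v : ℕ) : ℝ) - (v' : ℕ) ≤ w + 1) : (V.card : ℝ) ≤ w + 2 := by
  rcases V.eq_empty_or_nonempty with h | h
  · rw [h]; simp; linarith
  · have hm := V.min'_mem h
    have hM := V.max'_mem h
    have hle : V.min' h ≤ V.max' h := V.min'_le _ hM
    have hc : V.card ≤ (V.max' h : ℕ) + 1 - (V.min' h : ℕ) := by
      have : V ⊆ Finset.Icc (V.min' h) (V.max' h) := fun v hv =>
        Finset.mem_Icc.2 ⟨V.min'_le v hv, V.le_max' v hv⟩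
      have := Finset.card_le_card this
      rwa [Fin.card_Icc] at this
    have h1 := hV _ hM _ hm
    have h2 : (V.card : ℝ) ≤ (((V.max' h : ℕ) + 1 - (V.min' h : ℕ) : ℕ) : ℝ) := by exact_mod_cast hc
    rw [Nat.cast_sub (by have : (V.min' h : ℕ) ≤ (V.max' h : ℕ) := hle
                         omega)] at h2
    push_cast at h2
    linarith

theorem aux_count {I : Type*} [Fintype I] [DecidableEq I] (M k : ℕ) (hM : 0 < M) (w : ℝ)
    (hw : 0 ≤ w) (hρ : w + 2 / M ≤ 1) (g : (I → Fin M) → I → ℝ)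
    (hg : ∀ a, k ≤ (Finset.univ.filter (fun i : I =>
      ((a i : ℕ) : ℝ) < M * g a i ∧ M * g a i < (a i : ℕ) + 1)).card)
    (s : Finset (I → Fin M)) (hs : ∀ a ∈ s, ∀ b ∈ s, ∀ i, |g a i - g b i| ≤ w) :
    (s.card : ℝ) ≤ 2 ^ (Fintype.card I) * (M : ℝ) ^ (Fintype.card I) * (w + 2 / M) ^ k := by
  classical
  set m : (I → Fin M) → Finset I := fun a => Finset.univ.filter (fun i : I =>
      ((a i : ℕ) : ℝ) < M * g a i ∧ M * g a i < (a i : ℕ) + 1) with hm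
  set V : I → Finset (Fin M) := fun i => Finset.univ.filter (fun v : Fin M =>
    ∃ a ∈ s, ((v : ℕ) : ℝ) < M * g a i ∧ M * g a i < (v : ℕ) + 1) with hVdef
  have hMr : (0 : ℝ) < M := by exact_mod_cast hM
  have hV : ∀ i, ((V i).card : ℝ) ≤ M * w + 2 := by
    intro i
    apply aux_window M (M * w) (by positivity)
    intro v hv v' hv'
    obtain ⟨a, ha, h1, h2⟩ := (Finset.mem_filter.1 hv).2
    obtain ⟨b, hb, h3, h4⟩ := (Finset.mem_filter.1 hv').2
    have h5 := (abs_le.1 (hs a ha b hb i)).2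
    have h6 := mul_le_mul_of_nonneg_left h5 hMr.le
    rw [mul_sub] at h6
    linarith
  have hρ0 : 0 ≤ w + 2 / (M : ℝ) := by positivity
  have hS : ∀ S : Finset I, ((s.filter (fun a => m a = S)).card : ℝ) ≤
      (M : ℝ) ^ (Fintype.card I) * (w + 2 / M) ^ k := by
    intro S
    by_cases hSk : k ≤ S.card
    · have hsub : s.filter (fun a => m a = S) ⊆
          Fintype.piFinset (fun i => if i ∈ S then V i else Finset.univ) := by
        intro a ha
        obtain ⟨has, hma⟩ := Finset.mem_filter.1 ha
        rw [Fintype.mem_piFinset]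
        intro i
        by_cases hi : i ∈ S
        · simp only [hi, if_true]
          rw [← hma] at hi
          exact Finset.mem_filter.2 ⟨Finset.mem_univ _, a, has, (Finset.mem_filter.1 hi).2⟩
        · simp [hi]
      have h1 := Finset.card_le_card hsub
      rw [Fintype.card_piFinset] at h1
      have h2 : ((s.filter (fun a => m a = S)).card : ℝ) ≤
          ∏ i : I, (((if i ∈ S then V i else Finset.univ : Finset (Fin M)).card : ℕ) : ℝ) := by
        exact_mod_cast h1
      refine h2.trans ?_
      have h3 : ∏ i : I, (((if i ∈ S then V i else Finset.univ : Finset (Fin M)).card : ℕ) : ℝ) ≤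
          ∏ i : I, ((M : ℝ) * (if i ∈ S then (w + 2 / M) else 1)) := by
        apply Finset.prod_le_prod
        · intro i _; positivity
        · intro i _
          by_cases hi : i ∈ S
          · simp only [hi, if_true]
            refine (hV i).trans (le_of_eq ?_)
            field_simp
          · simp [hi]
      refine h3.trans ?_
      rw [Finset.prod_mul_distrib, Finset.prod_const, Finset.card_univ]
      apply mul_le_mul_of_nonneg_left _ (by positivity)
      rw [Finset.prod_ite_mem, Finset.univ_inter, Finset.prod_const]
      exact pow_le_pow_of_le_one hρ0 hρ hSk
    · have : s.filter (fun a => m a = S) = ∅ := by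
        rw [Finset.filter_eq_empty_iff]
        intro a _ h
        exact hSk (h ▸ hg a)
      rw [this]
      simp only [Finset.card_empty, Nat.cast_zero]
      positivity
  have htot : s.card = ∑ S : Finset I, (s.filter (fun a => m a = S)).card :=
    Finset.card_eq_sum_card_fiberwise (fun a _ => Finset.mem_univ (m a))
  rw [htot]
  push_cast
  refine (Finset.sum_le_sum (fun S _ => hS S)).trans ?_
  rw [Finset.sum_const, Finset.card_univ, Fintype.card_finset, nsmul_eq_mul]
  push_cast
  linarith

/-- existence of finite samples with Frostman-type bound -/
theorem aux_sample {X : Type*} [MetricSpace X] [CompactSpace X] (T : X → X) (hT : Continuous T)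
    (α : Finset (Set X)) (hα : IsFinOpenCover α) :
    ∃ (L : ℝ), 0 < L ∧ ∀ n : ℕ, 0 < n → ∀ k : ℕ, 0 < k → k ≤ Dcover (joinN T α n) →
      ∃ (p : ℕ) (x : Fin p → X), 0 < p ∧ ∀ r : ℝ, 0 ≤ r → L * r + 2 / n ≤ 1 →
        ∀ s : Finset (Fin p), (∀ a ∈ s, ∀ b ∈ s, ∀ j < n, dist (T^[j] (x a)) (T^[j] (x b)) ≤ r) →
        (s.card : ℝ) ≤ p * (2 ^ (α.card * n) * (L * r + 2 / n) ^ k) := by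
  classical
  obtain ⟨L, f, hL, hfc, hf1, hfp, hfL⟩ := aux_lip α hα
  refine ⟨L, hL, ?_⟩
  intro n hn k hk hkD
  have key : ∀ a : α × Fin n → Fin n, ∃ x : X, k ≤ (Finset.univ.filter (fun i : α × Fin n =>
      ((a i : ℕ) : ℝ) < n * f i.1 (T^[(i.2 : ℕ)] x) ∧
      n * f i.1 (T^[(i.2 : ℕ)] x) < (a i : ℕ) + 1)).card := by
    intro a
    by_contra! hcon
    rcases aux_cover T hT α n n k f hfc hf1 hfp a hcon with h | h <;> omega
  choose x hx using key
  set e := Fintype.equivFin (α × Fin n → Fin n) with he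
  have hcard : Fintype.card (α × Fin n → Fin n) = n ^ (α.card * n) := by
    simp
  refine ⟨Fintype.card (α × Fin n → Fin n), fun q => x (e.symm q), ?_, ?_⟩
  · rw [hcard]; positivity
  · intro r hr hρ s hs
    have h := aux_count (I := α × Fin n) n k hn (L * r) (by positivity) hρ
      (fun a i => f i.1 (T^[(i.2 : ℕ)] (x a))) hx (s.map e.symm.toEmbedding) (by
        intro a ha b hb i
        rw [Finset.mem_map_equiv] at ha hb
        refine (hfL _ _ _).trans ?_
        apply mul_le_mul_of_nonneg_left _ hL.le
        have := hs _ ha _ hb i.2 i.2.2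
        simpa using this)
    rw [Finset.card_map] at h
    refine h.trans (le_of_eq ?_)
    rw [hcard]
    simp only [Fintype.card_prod, Fintype.card_coe, Fintype.card_fin]
    push_cast
    ring

theorem aux_gibbs {W : Type*} [Fintype W] (p : ℕ) (w : Fin p → W) (q : W → ℝ)
    (hq : ∀ v, 0 < q v) (hq1 : ∑ v, q v ≤ 1) (η : ℝ) (hη : 0 < η)
    (hf : ∀ v : W, ∀ s : Finset (Fin p), (∀ a ∈ s, w a = v) → (s.card : ℝ) ≤ p * η) :
    (p : ℝ) * (- Real.log η) ≤ ∑ a, (- Real.log (q (w a))) := by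
  classical
  have h1 : ∑ a, (Real.log (q (w a)) - Real.log η) ≤ ∑ a, (q (w a) / η - 1) := by
    apply Finset.sum_le_sum
    intro a _
    rw [← Real.log_div (hq _).ne' hη.ne']
    exact Real.log_le_sub_one_of_pos (div_pos (hq _) hη)
  have h2 : ∑ a, q (w a) ≤ p * η := by
    rw [← Finset.sum_fiberwise Finset.univ w (fun a => q (w a))]
    have : ∀ v ∈ (Finset.univ : Finset W), ∑ a ∈ Finset.univ.filter (fun a => w a = v), q (w a) ≤
        q v * (p * η) := by
      intro v _
      have e : ∑ a ∈ Finset.univ.filter (fun a => w a = v), q (w a) =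
          ∑ a ∈ Finset.univ.filter (fun a => w a = v), q v := by
        apply Finset.sum_congr rfl
        intro a ha
        rw [(Finset.mem_filter.1 ha).2]
      rw [e, Finset.sum_const, nsmul_eq_mul, mul_comm]
      apply mul_le_mul_of_nonneg_left _ (hq v).le
      apply hf v
      intro a ha
      exact (Finset.mem_filter.1 ha).2
    refine (Finset.sum_le_sum this).trans ?_
    rw [← Finset.sum_mul]
    have : (0 : ℝ) ≤ p * η := by positivity
    nlinarith
  have h3 : ∑ a, (q (w a) / η - 1) ≤ 0 := by
    rw [Finset.sum_sub_distrib, ← Finset.sum_div]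
    simp only [Finset.sum_const, Finset.card_univ, Fintype.card_fin, nsmul_eq_mul, mul_one]
    rw [sub_nonpos, div_le_iff₀ hη]
    exact h2
  have h4 := h1.trans h3
  rw [Finset.sum_sub_distrib] at h4
  simp only [Finset.sum_const, Finset.card_univ, Fintype.card_fin, nsmul_eq_mul] at h4
  rw [Finset.sum_neg_distrib]
  linarith

theorem aux_sum_range_mul (G : ℕ → ℝ) (m l : ℕ) :
    ∑ s ∈ Finset.range m, ∑ k : Fin l, G (s + k * m) = ∑ j ∈ Finset.range (m * l), G j := by
  induction l with
  | zero => simp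
  | succ l ih =>
    rw [Nat.mul_succ, Finset.sum_range_add, ← ih, ← Finset.sum_add_distrib]
    apply Finset.sum_congr rfl
    intro s _
    rw [Fin.sum_univ_castSucc]
    simp only [Fin.val_castSucc, Fin.val_last]
    congr 2
    ring

theorem aux_shift {X A : Type*} [MetricSpace X] [Fintype A] (T : X → X) (code : X → A) (q : A → ℝ)
    (hq : ∀ v, 0 < q v) (hq1 : ∑ v, q v ≤ 1) (m l : ℕ) (hm : 0 < m) (r C : ℝ)
    (hcode : ∀ x y, code x = code y → ∀ j < m, dist (T^[j] x) (T^[j] y) ≤ r)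
    (hC : ∀ x, - Real.log (q (code x)) ≤ C)
    (p : ℕ) (x : Fin p → X) (η : ℝ) (hη : 0 < η)
    (hs : ∀ s : Finset (Fin p),
      (∀ a ∈ s, ∀ b ∈ s, ∀ j < m * l, dist (T^[j] (x a)) (T^[j] (x b)) ≤ r) →
      (s.card : ℝ) ≤ p * η) :
    (m : ℝ) * (p * (- Real.log η)) ≤ m * (p * C) +
      ∑ j ∈ Finset.range (m * l), ∑ a, (- Real.log (q (code (T^[j] (x a))))) := by
  classical
  have key : ∀ s ∈ Finset.range m, (p : ℝ) * (- Real.log η) ≤ p * C +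
      ∑ k : Fin l, ∑ a, (- Real.log (q (code (T^[s + k * m] (x a))))) := by
    intro s hsm
    have hsm' := Finset.mem_range.1 hsm
    have h := aux_gibbs p
      (fun a => (code (x a), fun k : Fin l => code (T^[s + k * m] (x a))))
      (fun v : A × (Fin l → A) => q v.1 * ∏ k, q (v.2 k))
      (fun v => mul_pos (hq _) (Finset.prod_pos fun k _ => hq _))
      (by
        rw [Fintype.sum_prod_type]
        simp only
        rw [← Finset.sum_mul_sum, ← Fintype.sum_pow]
        have h0 : 0 ≤ ∑ v, q v := Finset.sum_nonneg fun v _ => (hq v).le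
        exact mul_le_one₀ hq1 (pow_nonneg h0 _) (pow_le_one₀ h0 hq1))
      η hη (by
        intro v t ht
        apply hs
        intro a ha b hb j hj
        have hab := (ht a ha).trans (ht b hb).symm
        rw [Prod.mk.injEq] at hab
        by_cases hjs : j < s
        · exact hcode _ _ hab.1 j (hjs.trans hsm')
        · have hk : (j - s) / m < l := by
            rw [Nat.div_lt_iff_lt_mul hm, mul_comm]; omega
          have h1 := congrFun hab.2 ⟨(j - s) / m, hk⟩
          simp only at h1
          have h2 := hcode _ _ h1 ((j - s) % m) (Nat.mod_lt _ hm)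
          rw [← Function.iterate_add_apply, ← Function.iterate_add_apply] at h2
          have h3 : (j - s) % m + (s + (j - s) / m * m) = j := by
            have := Nat.mod_add_div' (j - s) m
            omega
          rwa [h3] at h2)
    refine h.trans ?_
    rw [Finset.sum_comm]
    have e : (p : ℝ) * C = ∑ a : Fin p, C := by simp
    rw [e, ← Finset.sum_add_distrib]
    apply Finset.sum_le_sum
    intro a _
    simp only
    rw [Real.log_mul (hq _).ne' (Finset.prod_pos fun k _ => hq _).ne',
      Real.log_prod (fun k _ => (hq _).ne'), neg_add, ← Finset.sum_neg_distrib]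
    have := hC (x a)
    linarith
  have h := Finset.sum_le_sum key
  rw [Finset.sum_add_distrib, aux_sum_range_mul
    (fun j => ∑ a, (- Real.log (q (code (T^[j] (x a))))))] at h
  simpa using h

theorem aux_limit {X : Type*} [MetricSpace X] [CompactSpace X] [MeasurableSpace X] [BorelSpace X]
    (T : X → X) (hT : Continuous T) (n p : ℕ → ℕ) (hn : ∀ k, 0 < n k) (hp : ∀ k, 0 < p k)
    (hnt : Tendsto n atTop atTop) (x : ∀ k, Fin (p k) → X) :
    ∃ (μ : Measure X) (𝒰 : Ultrafilter ℕ), IsProbabilityMeasure μ ∧ MeasurePreserving T μ μ ∧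
      (𝒰 : Filter ℕ) ≤ atTop ∧ ∀ Φ : BoundedContinuousFunction X ℝ,
        Tendsto (fun k => ((n k : ℝ) * p k)⁻¹ *
          ∑ j ∈ Finset.range (n k), ∑ a, Φ (T^[j] (x k a))) 𝒰 (𝓝 (∫ y, Φ y ∂μ)) := by
  classical
  set ν : ℕ → Measure X := fun k => ((n k * p k : ℕ) : ℝ≥0∞)⁻¹ •
    ∑ j ∈ Finset.range (n k), ∑ a, Measure.dirac (T^[j] (x k a)) with hν
  have hprob : ∀ k, IsProbabilityMeasure (ν k) := by
    intro k
    constructor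
    simp only [hν, Measure.smul_apply, Measure.coe_finsetSum, Finset.sum_apply, measure_univ,
      smul_eq_mul, Finset.sum_const, Finset.card_univ, Finset.card_range, Fintype.card_fin,
      nsmul_eq_mul, mul_one]
    have h0 : ((n k * p k : ℕ) : ℝ≥0∞) ≠ 0 := by
      have := Nat.mul_pos (hn k) (hp k)
      exact_mod_cast this.ne'
    rw [← Nat.cast_mul]
    exact ENNReal.inv_mul_cancel h0 (ENNReal.natCast_ne_top _)
  have hint : ∀ k, ∀ Φ : BoundedContinuousFunction X ℝ, ∫ y, Φ y ∂(ν k) = ((n k : ℝ) * p k)⁻¹ *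
          ∑ j ∈ Finset.range (n k), ∑ a, Φ (T^[j] (x k a)) := by
    intro k Φ
    simp only [hν]
    rw [integral_smul_measure, integral_finsetSum_measure]
    · rw [smul_eq_mul]
      congr 1
      · simp
      · apply Finset.sum_congr rfl
        intro j _
        rw [integral_finsetSum_measure]
        · apply Finset.sum_congr rfl
          intro a _
          rw [integral_dirac]
        · intro a _
          exact Φ.integrable _
    · intro j _
      exact Φ.integrable _
  set ν' : ℕ → ProbabilityMeasure X := fun k => ⟨ν k, hprob k⟩ with hν'
  set 𝒰 : Ultrafilter ℕ := Ultrafilter.of atTop with h𝒰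
  have h𝒰le : (𝒰 : Filter ℕ) ≤ atTop := Ultrafilter.of_le _
  obtain ⟨μ, -, hμ⟩ := isCompact_univ.ultrafilter_le_nhds (X := ProbabilityMeasure X)
    (𝒰.map ν') (by rw [principal_univ]; exact le_top)
  have hμ' : Tendsto ν' 𝒰 (𝓝 μ) := hμ
  have hlim : ∀ Φ : BoundedContinuousFunction X ℝ,
        Tendsto (fun k => ((n k : ℝ) * p k)⁻¹ *
          ∑ j ∈ Finset.range (n k), ∑ a, Φ (T^[j] (x k a))) 𝒰 (𝓝 (∫ y, Φ y ∂(μ : Measure X))) := by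
    intro Φ
    have := (ProbabilityMeasure.tendsto_iff_forall_integral_tendsto.1 hμ') Φ
    refine this.congr ?_
    intro k
    exact hint k Φ
  refine ⟨(μ : Measure X), 𝒰, inferInstance, ?_, h𝒰le, hlim⟩
  refine ⟨hT.measurable, ?_⟩
  have : IsProbabilityMeasure (Measure.map T (μ : Measure X)) :=
    Measure.isProbabilityMeasure_map hT.measurable.aemeasurable
  apply ext_of_forall_integral_eq_of_IsFiniteMeasure
  intro f
  rw [integral_map hT.measurable.aemeasurable f.continuous.aestronglyMeasurable]
  set g : BoundedContinuousFunction X ℝ := f.compContinuous ⟨T, hT⟩ with hg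
  have h1 := hlim g
  have h2 := hlim f
  have h3 : Tendsto (fun k => (2 * ‖f‖) * (n k : ℝ)⁻¹) 𝒰 (𝓝 0) := by
    have : Tendsto (fun k => (2 * ‖f‖) * (n k : ℝ)⁻¹) atTop (𝓝 ((2 * ‖f‖) * 0)) :=
      ((tendsto_inv_atTop_zero.comp (tendsto_natCast_atTop_atTop.comp hnt))).const_mul _
    rw [mul_zero] at this
    exact this.mono_left h𝒰le
  have h4 := h1.sub h2
  have h5 : Tendsto (fun k => ((n k : ℝ) * p k)⁻¹ *
          ∑ j ∈ Finset.range (n k), ∑ a, g (T^[j] (x k a)) - ((n k : ℝ) * p k)⁻¹ *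
          ∑ j ∈ Finset.range (n k), ∑ a, f (T^[j] (x k a))) 𝒰 (𝓝 0) := by
    apply squeeze_zero_norm _ h3
    intro k
    rw [← mul_sub, Finset.sum_comm, Finset.sum_comm (s := Finset.range (n k)),
      ← Finset.sum_sub_distrib]
    have e : ∀ a : Fin (p k), ∑ j ∈ Finset.range (n k), g (T^[j] (x k a)) -
        ∑ j ∈ Finset.range (n k), f (T^[j] (x k a)) = f (T^[n k] (x k a)) - f (x k a) := by
      intro a
      rw [← Finset.sum_sub_distrib]
      have := Finset.sum_range_sub (fun j => f (T^[j] (x k a))) (n k)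
      simp only [Function.iterate_zero, id] at this
      rw [← this]
      apply Finset.sum_congr rfl
      intro j _
      rw [Function.iterate_succ_apply']
      rfl
    rw [Finset.sum_congr rfl (fun a _ => e a), norm_mul]
    have h6 : ‖∑ a : Fin (p k), (f (T^[n k] (x k a)) - f (x k a))‖ ≤ p k * (2 * ‖f‖) := by
      refine (norm_sum_le _ _).trans ?_
      have : ∀ a ∈ (Finset.univ : Finset (Fin (p k))),
          ‖f (T^[n k] (x k a)) - f (x k a)‖ ≤ 2 * ‖f‖ := by
        intro a _
        refine (norm_sub_le _ _).trans ?_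
        have := f.norm_coe_le_norm (T^[n k] (x k a))
        have := f.norm_coe_le_norm (x k a)
        linarith
      refine (Finset.sum_le_sum this).trans ?_
      simp
    have hn' : (0 : ℝ) < n k := by exact_mod_cast hn k
    have hp' : (0 : ℝ) < p k := by exact_mod_cast hp k
    rw [Real.norm_of_nonneg (by positivity)]
    refine (mul_le_mul_of_nonneg_left h6 (by positivity)).trans (le_of_eq ?_)
    field_simp
  have h7 := tendsto_nhds_unique h4 h5
  have : ∫ y, g y ∂(μ : Measure X) = ∫ y, f y ∂(μ : Measure X) := by linarith
  exact this

theorem aux_join_mem {X : Type*} (T : X → X) (P : Finset (Set X)) (n : ℕ) (B : Set X) :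
    B ∈ joinN T P n ↔ ∃ f : Fin n → Set X, (∀ j, f j ∈ P) ∧ B = ⋂ j : Fin n, T^[(j : ℕ)] ⁻¹' f j := by
  unfold joinN
  rw [Finset.mem_image]
  constructor
  · rintro ⟨f, hf, rfl⟩
    exact ⟨f, fun j => Fintype.mem_piFinset.1 hf j, rfl⟩
  · rintro ⟨f, hf, rfl⟩
    exact ⟨f, Fintype.mem_piFinset.2 hf, rfl⟩

theorem aux_join_part {X : Type*} [MeasurableSpace X] (T : X → X) (hT : Measurable T)
    (P : Finset (Set X)) (hP : IsFinPartition P) (n : ℕ) : IsFinPartition (joinN T P n) := by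
  refine ⟨?_, ?_, ?_⟩
  · intro B hB
    obtain ⟨f, hf, rfl⟩ := (aux_join_mem T P n B).1 hB
    exact MeasurableSet.iInter fun j => (hT.iterate _) (hP.1 _ (hf j))
  · intro B hB B' hB' hne
    obtain ⟨f, hf, rfl⟩ := (aux_join_mem T P n _).1 hB
    obtain ⟨g, hg, rfl⟩ := (aux_join_mem T P n _).1 hB'
    have : ∃ j, f j ≠ g j := by
      by_contra! h
      exact hne (by simp [h])
    obtain ⟨j, hj⟩ := this
    rw [Set.disjoint_left]
    intro x hx hx'
    rw [Set.mem_iInter] at hx hx'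
    exact Set.disjoint_left.1 (hP.2.1 _ (hf j) _ (hg j) hj) (hx j) (hx' j)
  · rw [Set.eq_univ_iff_forall]
    intro x
    have : ∀ j : Fin n, ∃ A ∈ P, T^[(j : ℕ)] x ∈ A := by
      intro j
      have := Set.eq_univ_iff_forall.1 hP.2.2 (T^[(j : ℕ)] x)
      simpa using this
    choose f hf hx using this
    exact ⟨⋂ j : Fin n, T^[(j : ℕ)] ⁻¹' f j, (aux_join_mem T P n _).2 ⟨f, hf, rfl⟩,
      Set.mem_iInter.2 hx⟩

theorem aux_part_sum {X : Type*} [MeasurableSpace X] (μ : Measure X) [IsProbabilityMeasure μ]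
    (J : Finset (Set X)) (hJ : IsFinPartition J) : ∑ B ∈ J, (μ B).toReal = 1 := by
  rw [← ENNReal.toReal_sum (fun B _ => measure_ne_top μ B)]
  have : μ (⋃ B ∈ J, B) = ∑ B ∈ J, μ B := by
    apply measure_biUnion_finset
    · intro B hB B' hB' hne
      exact hJ.2.1 B hB B' hB' hne
    · exact hJ.1
  rw [← this]
  have h2 : (⋃ B ∈ J, B) = univ := by
    rw [← hJ.2.2, Set.sUnion_eq_biUnion]; rfl
  rw [h2]; simp

theorem aux_toReal_le_one {X : Type*} [MeasurableSpace X] (μ : Measure X) [IsProbabilityMeasure μ]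
    (B : Set X) : (μ B).toReal ≤ 1 := by
  have h := ENNReal.toReal_mono ENNReal.one_ne_top (prob_le_one (μ := μ) (s := B))
  simpa using h

theorem aux_neg_nonneg {X : Type*} [MeasurableSpace X] (μ : Measure X) [IsProbabilityMeasure μ]
    (B : Set X) : 0 ≤ -((μ B).toReal * Real.log ((μ B).toReal)) := by
  have := Real.log_nonpos (ENNReal.toReal_nonneg (a := μ B)) (aux_toReal_le_one μ B)
  have h2 := mul_nonpos_of_nonneg_of_nonpos (ENNReal.toReal_nonneg (a := μ B)) this
  linarith

theorem aux_entP_eq {X : Type*} [MeasurableSpace X] (μ : Measure X) [IsProbabilityMeasure μ]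
    (J : Finset (Set X)) :
    entP μ J = ENNReal.ofReal (∑ B ∈ J, -((μ B).toReal * Real.log ((μ B).toReal))) := by
  unfold entP
  rw [ENNReal.ofReal_sum_of_nonneg]
  intro B _
  exact aux_neg_nonneg μ B

theorem aux_backup {X : Type*} [MetricSpace X] [CompactSpace X] (T : X → X) (hT : Continuous T)
    (m : ℕ) (ε : ℝ) (hε : 0 < ε) :
    ∃ t : Finset X, ∀ x, ∃ y ∈ t, ∀ j < m, dist (T^[j] x) (T^[j] y) < ε := by
  obtain ⟨t, ht⟩ := isCompact_univ.elim_finite_subcover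
    (fun y : X => ⋂ j ∈ Finset.range m, {x | dist (T^[j] x) (T^[j] y) < ε})
    (fun y => isOpen_biInter_finset fun j _ =>
      isOpen_lt ((hT.iterate j).dist continuous_const) continuous_const)
    (by
      intro y _
      rw [Set.mem_iUnion]
      refine ⟨y, ?_⟩
      simp [hε])
  refine ⟨t, fun x => ?_⟩
  have := ht (mem_univ x)
  simp only [Set.mem_iUnion, Set.mem_iInter, Finset.mem_range] at this
  obtain ⟨y, hy, h⟩ := this
  exact ⟨y, hy, h⟩

theorem aux_rho {X : Type*} [MetricSpace X] [CompactSpace X] (T : X → X) (hT : Continuous T)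
    (m : ℕ) (ε : ℝ) (hε : 0 < ε) (J : Finset (Set X)) (K : Set X → Set X)
    (hK : ∀ B ∈ J, IsClosed (K B))
    (hd : ∀ B ∈ J, ∀ B' ∈ J, B ≠ B' → Disjoint (K B) (K B')) :
    ∃ ρ : ℝ, 0 < ρ ∧ (∀ B ∈ J, ∀ B' ∈ J, B ≠ B' →
      Disjoint (Metric.thickening ρ (K B)) (Metric.thickening ρ (K B'))) ∧
      ∀ x y, dist x y < ρ → ∀ j < m, dist (T^[j] x) (T^[j] y) < ε := by
  have h1 : ∀ᶠ ρ in 𝓝[>] (0 : ℝ), ∀ B ∈ J, ∀ B' ∈ J, B ≠ B' →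
      Disjoint (Metric.thickening ρ (K B)) (Metric.thickening ρ (K B')) := by
    rw [Filter.eventually_all_finset]
    intro B hB
    rw [Filter.eventually_all_finset]
    intro B' hB'
    by_cases hne : B = B'
    · simp [hne]
    · obtain ⟨δ, hδ, hdis⟩ := (hd B hB B' hB' hne).exists_thickenings (hK B hB).isCompact (hK B' hB')
      filter_upwards [Ioo_mem_nhdsGT hδ] with ρ hρ _
      exact hdis.mono (Metric.thickening_mono hρ.2.le _) (Metric.thickening_mono hρ.2.le _)
  have h2 : ∀ᶠ ρ in 𝓝[>] (0 : ℝ), ∀ j ∈ Finset.range m, ∀ x y, dist x y < ρ →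
      dist (T^[j] x) (T^[j] y) < ε := by
    rw [Filter.eventually_all_finset]
    intro j _
    have hu := CompactSpace.uniformContinuous_of_continuous (hT.iterate j)
    obtain ⟨δ, hδ, h⟩ := Metric.uniformContinuous_iff.1 hu ε hε
    filter_upwards [Ioo_mem_nhdsGT hδ] with ρ hρ x y hxy
    exact h (hxy.trans hρ.2)
  obtain ⟨ρ, ⟨ha, hb⟩, hc⟩ := ((h1.and h2).and self_mem_nhdsWithin).exists
  exact ⟨ρ, hc, ha, fun x y hxy j hj => hb j (Finset.mem_range.2 hj) x y hxy⟩

theorem aux_code {X : Type*} [MetricSpace X] [CompactSpace X] [MeasurableSpace X] [BorelSpace X]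
    (T : X → X) (hT : Continuous T) (μ : Measure X) [IsProbabilityMeasure μ]
    (P : Finset (Set X)) (hP : IsFinPartition P) (ε : ℝ) (hε : 0 < ε)
    (hPd : ∀ s ∈ P, Metric.diam s ≤ ε) (m : ℕ) (δ : ℝ) (hδ : 0 < δ) :
    ∃ (N : ℕ) (code : X → Fin N) (q : Fin N → ℝ) (C : ℝ) (Φ : BoundedContinuousFunction X ℝ),
      (∀ v, 0 < q v) ∧ ∑ v, q v ≤ 1 ∧
      (∀ x y, code x = code y → ∀ j < m, dist (T^[j] x) (T^[j] y) ≤ 2 * ε) ∧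
      (∀ x, - Real.log (q (code x)) ≤ C) ∧ (∀ x, - Real.log (q (code x)) ≤ Φ x) ∧
      ∫ y, Φ y ∂μ ≤ (entP μ (joinN T P m)).toReal + Real.log 2 + δ := by
  classical
  have hXne : Nonempty X := by
    by_contra h
    rw [not_nonempty_iff] at h
    have h1 := measure_univ (μ := μ)
    rw [Set.univ_eq_empty_iff.2 h, measure_empty] at h1
    exact zero_ne_one h1
  have hJp := aux_join_part T hT.measurable P hP m
  set J0 := joinN T P m with hJ0
  set J := J0.filter (fun B => 0 < (μ B).toReal) with hJ
  have hJd : ∀ B ∈ J0, ∀ x ∈ B, ∀ y ∈ B, ∀ j < m, dist (T^[j] x) (T^[j] y) ≤ ε := by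
    intro B hB x hx y hy j hj
    obtain ⟨f, hf, rfl⟩ := (aux_join_mem T P m _).1 hB
    rw [Set.mem_iInter] at hx hy
    have h1 : T^[j] x ∈ f ⟨j, hj⟩ := hx ⟨j, hj⟩
    have h2 : T^[j] y ∈ f ⟨j, hj⟩ := hy ⟨j, hj⟩
    exact (Metric.dist_le_diam_of_mem Metric.isBounded_of_compactSpace h1 h2).trans (hPd _ (hf ⟨j, hj⟩))
  have hsum : ∑ B ∈ J, (μ B).toReal = 1 := by
    rw [← aux_part_sum μ J0 hJp, hJ]
    apply Finset.sum_filter_of_ne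
    intro B _ h
    exact lt_of_le_of_ne ENNReal.toReal_nonneg (Ne.symm h)
  have hent : (entP μ J0).toReal = ∑ B ∈ J, -((μ B).toReal * Real.log ((μ B).toReal)) := by
    rw [aux_entP_eq, ENNReal.toReal_ofReal (Finset.sum_nonneg fun B _ => aux_neg_nonneg μ B), hJ]
    symm
    apply Finset.sum_filter_of_ne
    intro B _ h
    refine lt_of_le_of_ne ENNReal.toReal_nonneg (fun h0 => h ?_)
    rw [← h0]; simp
  obtain ⟨t, ht⟩ := aux_backup T hT m ε hε
  have htne : 0 < t.card := by
    obtain ⟨x⟩ := hXne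
    obtain ⟨y, hy, _⟩ := ht x
    exact Finset.card_pos.2 ⟨y, hy⟩
  set c : Set X → ℝ := fun B => Real.log 2 - Real.log (μ B).toReal with hc
  have hc0 : ∀ B ∈ J, 0 ≤ c B := by
    intro B hB
    have h1 := Real.log_nonpos (ENNReal.toReal_nonneg (a := μ B)) (aux_toReal_le_one μ B)
    have h2 := Real.log_nonneg (show (1 : ℝ) ≤ 2 by norm_num)
    simp only [hc]; linarith
  set C : ℝ := Real.log (2 * t.card) + ∑ B ∈ J, c B with hC
  have htc1 : (1 : ℝ) ≤ t.card := by exact_mod_cast htne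
  have hlogt : 0 ≤ Real.log (2 * t.card) := Real.log_nonneg (by linarith)
  have hcC : ∀ B ∈ J, c B ≤ C := by
    intro B hB
    have := Finset.single_le_sum hc0 hB
    simp only [hC]; linarith
  have hlogC : Real.log (2 * t.card) ≤ C := by
    have := Finset.sum_nonneg hc0
    simp only [hC]; linarith
  set S : ℝ := ∑ B ∈ J, (C - c B) with hS
  have hS0 : 0 ≤ S := Finset.sum_nonneg fun B hB => by linarith [hcC B hB]
  set δ' : ℝ := δ / (1 + S) with hδ'
  have hδ'0 : 0 < δ' := by positivity
  have hKex : ∀ B : Set X, ∃ K : Set X, B ∈ J → K ⊆ B ∧ IsClosed K ∧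
      (μ B).toReal - δ' ≤ (μ K).toReal := by
    intro B
    by_cases hB : B ∈ J
    · obtain ⟨K, hKB, hKc, hK⟩ := MeasurableSet.exists_isClosed_sdiff_lt
        (μ := μ) (hJp.1 B (Finset.mem_filter.1 hB).1) (measure_ne_top μ B)
        (ε := ENNReal.ofReal δ') (by simpa using hδ'0)
      refine ⟨K, fun _ => ⟨hKB, hKc, ?_⟩⟩
      have h1 : μ B ≤ μ K + μ (B \ K) := by
        refine (measure_mono ?_).trans (measure_union_le K (B \ K))
        rw [Set.union_sdiff_self]; exact Set.subset_union_right
      have h2 : μ B ≤ μ K + ENNReal.ofReal δ' := h1.trans (by gcongr)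
      have h3 := ENNReal.toReal_mono (by finiteness) h2
      rw [ENNReal.toReal_add (measure_ne_top μ K) ENNReal.ofReal_ne_top,
        ENNReal.toReal_ofReal hδ'0.le] at h3
      linarith
    · exact ⟨∅, fun h => absurd h hB⟩
  choose K hK using hKex
  obtain ⟨ρ, hρ, hρd, hρu⟩ := aux_rho T hT m (ε / 2) (by positivity) J K (fun B hB => (hK B hB).2.1)
    (by
      intro B hB B' hB' hne
      exact (hJp.2.1 B (Finset.mem_filter.1 hB).1 B' (Finset.mem_filter.1 hB').1 hne).mono
        (hK B hB).1 (hK B' hB').1)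
  set G : Set X → Set X := fun B => Metric.thickening ρ (K B) with hG
  have hGd : ∀ B ∈ J, ∀ x ∈ G B, ∀ y ∈ G B, ∀ j < m, dist (T^[j] x) (T^[j] y) ≤ 2 * ε := by
    intro B hB x hx y hy j hj
    obtain ⟨x', hx', hxx⟩ := Metric.mem_thickening_iff.1 hx
    obtain ⟨y', hy', hyy⟩ := Metric.mem_thickening_iff.1 hy
    have h1 := hρu _ _ hxx j hj
    have h2 := hρu _ _ hyy j hj
    have h3 := hJd B (Finset.mem_filter.1 hB).1 x' ((hK B hB).1 hx') y' ((hK B hB).1 hy') j hj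
    have h4 := dist_triangle4 (T^[j] x) (T^[j] x') (T^[j] y') (T^[j] y)
    rw [dist_comm (T^[j] y') (T^[j] y)] at h4
    linarith
  set φ : Set X → X → ℝ := fun B x => (thickenedIndicator hρ (K B) x : ℝ) with hφ
  have hφc : ∀ B, Continuous (φ B) := fun B =>
    NNReal.continuous_coe.comp (thickenedIndicator hρ (K B)).continuous
  have hφ1 : ∀ B x, φ B x ≤ 1 := fun B x => by
    exact_mod_cast thickenedIndicator_le_one hρ (K B) x
  have hφ0 : ∀ B x, 0 ≤ φ B x := fun B x => NNReal.coe_nonneg _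
  have hφz : ∀ B x, x ∉ G B → φ B x = 0 := fun B x hx => by
    simp only [hφ]; rw [thickenedIndicator_zero hρ (K B) hx]; rfl
  have hφK : ∀ B x, x ∈ K B → φ B x = 1 := fun B x hx => by
    simp only [hφ]; rw [thickenedIndicator_one hρ (K B) hx]; rfl
  -- the code
  have hcodeex : ∀ x : X, ∃ v : (J ⊕ t), (∃ B : J, v = Sum.inl B ∧ x ∈ G B) ∨
      ((∀ B ∈ J, x ∉ G B) ∧ ∃ y : t, v = Sum.inr y ∧
        ∀ j < m, dist (T^[j] x) (T^[j] (y : X)) < ε) := by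
    intro x
    by_cases h : ∃ B ∈ J, x ∈ G B
    · obtain ⟨B, hB, hx⟩ := h
      exact ⟨Sum.inl ⟨B, hB⟩, Or.inl ⟨⟨B, hB⟩, rfl, hx⟩⟩
    · push Not at h
      obtain ⟨y, hy, hyx⟩ := ht x
      exact ⟨Sum.inr ⟨y, hy⟩, Or.inr ⟨h, ⟨y, hy⟩, rfl, hyx⟩⟩
  choose code0 hcode0 using hcodeex
  set q0 : (J ⊕ t) → ℝ := Sum.elim (fun B => (μ (B : Set X)).toReal / 2) (fun _ => Real.exp (-C))
    with hq0
  set e := Fintype.equivFin (J ⊕ t) with he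
  have hlogq : ∀ B ∈ J, - Real.log ((μ B).toReal / 2) = c B := by
    intro B hB
    have := (Finset.mem_filter.1 hB).2
    rw [Real.log_div this.ne' (by norm_num)]
    simp only [hc]; ring
  set Φ0 : X → ℝ := fun x => C - ∑ B ∈ J, (C - c B) * φ B x with hΦ0
  have hΦc : Continuous Φ0 :=
    continuous_const.sub (continuous_finsetSum _ fun B _ => continuous_const.mul (hφc B))
  refine ⟨_, fun x => e (code0 x), fun v => q0 (e.symm v), C,
    BoundedContinuousFunction.mkOfCompact ⟨Φ0, hΦc⟩, ?_, ?_, ?_, ?_, ?_, ?_⟩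
  · intro v
    show 0 < q0 (e.symm v)
    generalize e.symm v = w
    rcases w with B | y
    · have := (Finset.mem_filter.1 B.2).2
      simp only [hq0, Sum.elim_inl]; linarith
    · simp only [hq0, Sum.elim_inr]; exact Real.exp_pos _
  · rw [Equiv.sum_comp e.symm q0, Fintype.sum_sum_type]
    simp only [hq0, Sum.elim_inl, Sum.elim_inr]
    rw [Finset.sum_const, Finset.card_univ, Fintype.card_coe, nsmul_eq_mul]
    have h1 : ∑ B : J, (μ (B : Set X)).toReal / 2 = 1 / 2 := by
      rw [← Finset.sum_div, Finset.sum_coe_sort J (fun B => (μ B).toReal), hsum]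
    have h2 : Real.exp (-C) ≤ (2 * t.card : ℝ)⁻¹ := by
      rw [Real.exp_neg]
      apply inv_anti₀ (by positivity)
      rw [← Real.log_le_iff_le_exp (by positivity)]
      exact hlogC
    have h3 := mul_le_mul_of_nonneg_left h2 (show (0 : ℝ) ≤ t.card by positivity)
    have h4 : (t.card : ℝ) * (2 * t.card : ℝ)⁻¹ = 1 / 2 := by field_simp
    rw [h1]; linarith
  · intro x y hxy j hj
    have hxy' : code0 x = code0 y := e.injective hxy
    rcases hcode0 x with ⟨B, hB, hx⟩ | ⟨_, z, hz, hx⟩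
    · rcases hcode0 y with ⟨B', hB', hy⟩ | ⟨_, z', hz', hy⟩
      · rw [hB, hB', Sum.inl.injEq] at hxy'
        subst hxy'
        exact hGd B B.2 x hx y hy j hj
      · rw [hB, hz'] at hxy'; exact absurd hxy' (by simp)
    · rcases hcode0 y with ⟨B', hB', hy⟩ | ⟨_, z', hz', hy⟩
      · rw [hz, hB'] at hxy'; exact absurd hxy' (by simp)
      · rw [hz, hz', Sum.inr.injEq] at hxy'
        subst hxy'
        have h1 := hx j hj
        have h2 := hy j hj
        have h3 := dist_triangle_right (T^[j] x) (T^[j] y) (T^[j] (z : X))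
        linarith
  · intro x
    simp only [Equiv.symm_apply_apply]
    rcases hcode0 x with ⟨B, hB, hx⟩ | ⟨_, z, hz, hx⟩
    · rw [hB]; simp only [hq0, Sum.elim_inl]; rw [hlogq B B.2]; exact hcC B B.2
    · rw [hz]; simp only [hq0, Sum.elim_inr]; rw [Real.log_exp]; linarith
  · intro x
    simp only [Equiv.symm_apply_apply, BoundedContinuousFunction.mkOfCompact_apply,
      ContinuousMap.coe_mk]
    rcases hcode0 x with ⟨B, hB, hx⟩ | ⟨hno, z, hz, hx⟩
    · rw [hB]; simp only [hq0, Sum.elim_inl]; rw [hlogq B B.2]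
      simp only [hΦ0]
      rw [Finset.sum_eq_single (B : Set X)]
      · have h1 := hcC B B.2
        have h2 := hφ1 B x
        nlinarith
      · intro B' hB' hne
        rw [hφz B' x, mul_zero]
        exact fun hx' => Set.disjoint_left.1 (hρd B' hB' B B.2 hne) hx' hx
      · intro h; exact absurd B.2 h
    · rw [hz]; simp only [hq0, Sum.elim_inr]; rw [Real.log_exp]
      simp only [hΦ0]
      rw [Finset.sum_eq_zero]
      · simp
      · intro B hB
        rw [hφz B x (hno B hB), mul_zero]
  · simp only [BoundedContinuousFunction.mkOfCompact_apply, ContinuousMap.coe_mk]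
    have hφi : ∀ B, Integrable (φ B) μ := fun B =>
      (BoundedContinuousFunction.mkOfCompact ⟨φ B, hφc B⟩).integrable μ
    have hi : ∫ y, Φ0 y ∂μ = C - ∑ B ∈ J, (C - c B) * ∫ y, φ B y ∂μ := by
      simp only [hΦ0]
      rw [integral_sub (integrable_const _)
        (integrable_finsetSum _ fun B _ => (hφi B).const_mul _), integral_const,
        integral_finsetSum _ (fun B _ => (hφi B).const_mul _)]
      simp [integral_const_mul]
    have hφint : ∀ B ∈ J, (μ B).toReal - δ' ≤ ∫ y, φ B y ∂μ := by
      intro B hB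
      refine (hK B hB).2.2.trans ?_
      have hm : MeasurableSet (K B) := (hK B hB).2.1.measurableSet
      have h1 : (μ (K B)).toReal = ∫ y, (K B).indicator (fun _ => (1 : ℝ)) y ∂μ := by
        rw [integral_indicator hm]; simp [Measure.real]
      rw [h1]
      apply integral_mono ((integrable_const _).indicator hm) (hφi B)
      intro y
      by_cases hy : y ∈ K B
      · simp [hy, hφK B y hy]
      · simp [hy, hφ0 B y]
    rw [hi, hent]
    have h1 : ∑ B ∈ J, (C - c B) * ((μ B).toReal - δ') ≤ ∑ B ∈ J, (C - c B) * ∫ y, φ B y ∂μ :=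
      Finset.sum_le_sum fun B hB =>
        mul_le_mul_of_nonneg_left (hφint B hB) (by linarith [hcC B hB])
    have h2 : ∑ B ∈ J, (C - c B) * ((μ B).toReal - δ') =
        C * ∑ B ∈ J, (μ B).toReal - Real.log 2 * ∑ B ∈ J, (μ B).toReal -
          ∑ B ∈ J, -((μ B).toReal * Real.log ((μ B).toReal)) - S * δ' := by
      rw [hS, Finset.mul_sum, Finset.mul_sum, Finset.sum_mul, ← Finset.sum_sub_distrib,
        ← Finset.sum_sub_distrib, ← Finset.sum_sub_distrib]
      apply Finset.sum_congr rfl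
      intro B _
      simp only [hc]; ring
    rw [hsum] at h2
    have h3 : S * δ' ≤ δ := by
      rw [hδ', mul_div_assoc', div_le_iff₀ (by positivity)]
      nlinarith
    linarith

theorem aux_low1 {X : Type*} [MetricSpace X] [CompactSpace X] [MeasurableSpace X] [BorelSpace X]
    (T : X → X) (hT : Continuous T) (α : Finset (Set X)) (hα : IsFinOpenCover α) (c : ℝ)
    (hc : 0 < c) (hD : ∀ᶠ n : ℕ in atTop, c * n ≤ Dcover (joinN T α n)) :
    ∃ (μ : Measure X) (L : ℝ), IsProbabilityMeasure μ ∧ MeasurePreserving T μ μ ∧ 0 < L ∧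
      ∀ ε : ℝ, 0 < ε → L * ε ≤ 1 → ∀ P : Finset (Set X), IsFinPartition P →
        (∀ s ∈ P, Metric.diam s ≤ ε) → ∀ m : ℕ, 0 < m → 
        (m : ℝ) * (c * (- Real.log (L * ε)) - α.card * Real.log 2) ≤
          (entP μ (joinN T P m)).toReal + Real.log 2 + 1 := by
  obtain ⟨L, hL, hsam⟩ := aux_sample T hT α hα
  obtain ⟨k0, hk0⟩ := eventually_atTop.1 hD
  set n : ℕ → ℕ := fun k => (k + k0).factorial with hn
  have hnpos : ∀ k, 0 < n k := fun k => Nat.factorial_pos _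
  have hnk : ∀ k, k + k0 ≤ n k := fun k => Nat.self_le_factorial _
  have hDk : ∀ k, c * n k ≤ Dcover (joinN T α (n k)) := fun k => hk0 _ (by have := hnk k; omega)
  have hDpos : ∀ k, 0 < Dcover (joinN T α (n k)) := by
    intro k
    have h1 := hDk k
    have h2 : (0 : ℝ) < n k := by exact_mod_cast hnpos k
    have h3 : (0 : ℝ) < Dcover (joinN T α (n k)) := lt_of_lt_of_le (by positivity) h1
    exact_mod_cast h3
  choose p x hp hx using fun k => hsam (n k) (hnpos k) (Dcover (joinN T α (n k))) (hDpos k) le_rfl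
  have hnt : Tendsto n atTop atTop :=
    tendsto_atTop_mono (fun k => (Nat.le_add_right k k0).trans (hnk k)) tendsto_id
  obtain ⟨μ, 𝒰, hμ, hμT, h𝒰, hlim⟩ := aux_limit T hT n p hnpos hp hnt x
  refine ⟨μ, 4 * L, hμ, hμT, by positivity, ?_⟩
  intro ε hε hLε P hP hPd m hm
  obtain ⟨N, code, q, C, Φ, hq, hq1, hcode, hC, hΦ, hint⟩ :=
    aux_code T hT μ P hP ε hε hPd m 1 one_pos
  refine le_trans ?_ hint
  set h : ℝ := c * (- Real.log (4 * L * ε)) - α.card * Real.log 2 with hh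
  have hev : ∀ᶠ k in atTop, (m : ℝ) * h ≤ m * C * (n k : ℝ)⁻¹ + ((n k : ℝ) * p k)⁻¹ *
          ∑ j ∈ Finset.range (n k), ∑ a, Φ (T^[j] (x k a)) := by
    have e1 : ∀ᶠ k in atTop, 2 / (n k : ℝ) ≤ L * (2 * ε) := by
      have : Tendsto (fun k => 2 / (n k : ℝ)) atTop (𝓝 0) :=
        (tendsto_const_nhds).div_atTop (tendsto_natCast_atTop_atTop.comp hnt)
      exact this.eventually_le_const (by positivity)
    filter_upwards [e1, eventually_ge_atTop m] with k hk hkm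
    obtain ⟨l, hl⟩ : m ∣ n k := Nat.dvd_factorial hm (by omega)
    have hnR : (0 : ℝ) < n k := by exact_mod_cast hnpos k
    have hpR : (0 : ℝ) < p k := by exact_mod_cast hp k
    set D := Dcover (joinN T α (n k)) with hDdef
    set w : ℝ := L * (2 * ε) + 2 / n k with hw
    have hw0 : 0 < w := by positivity
    have hw1 : w ≤ 4 * L * ε := by linarith
    have hη : (0 : ℝ) < 2 ^ (α.card * n k) * w ^ D := by positivity
    have hs := hx k (2 * ε) (by positivity) (by linarith)
    have key := aux_shift T code q hq hq1 m l hm (2 * ε) C hcode hC (p k) (x k) _ hη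
      (by rw [← hl]; exact hs)
    rw [← hl] at key
    have h2 : ∑ j ∈ Finset.range (n k), ∑ a, (- Real.log (q (code (T^[j] (x k a))))) ≤
        ∑ j ∈ Finset.range (n k), ∑ a, Φ (T^[j] (x k a)) :=
      Finset.sum_le_sum fun j _ => Finset.sum_le_sum fun a _ => hΦ _
    have h3 : n k * h ≤ - Real.log (2 ^ (α.card * n k) * w ^ D) := by
      rw [Real.log_mul (by positivity) (by positivity), Real.log_pow, Real.log_pow]
      have a1 : Real.log w ≤ Real.log (4 * L * ε) := Real.log_le_log hw0 hw1
      have a2 : Real.log (4 * L * ε) ≤ 0 := Real.log_nonpos (by positivity) hLε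
      have a3 : (c * n k) * (- Real.log (4 * L * ε)) ≤ D * (- Real.log w) :=
        mul_le_mul (hDk k) (by linarith) (by linarith) (by positivity)
      rw [hh]
      push_cast
      nlinarith
    set SS := ∑ j ∈ Finset.range (n k), ∑ a, Φ (T^[j] (x k a)) with hSS
    have h4 : (m : ℝ) * (p k * (n k * h)) ≤ m * (p k * C) + SS := by
      refine le_trans ?_ (key.trans (by linarith))
      gcongr
    have h5 : m * C * (n k : ℝ)⁻¹ + ((n k : ℝ) * p k)⁻¹ * SS =
        (m * (p k * C) + SS) / (n k * p k) := by
      field_simp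
    rw [h5, le_div_iff₀ (by positivity)]
    linarith
  have hl2 : Tendsto (fun k => m * C * (n k : ℝ)⁻¹ + ((n k : ℝ) * p k)⁻¹ *
          ∑ j ∈ Finset.range (n k), ∑ a, Φ (T^[j] (x k a))) 𝒰 (𝓝 (m * C * 0 + ∫ y, Φ y ∂μ)) := by
    refine Tendsto.add ?_ (hlim Φ)
    exact (((tendsto_inv_atTop_zero.comp
      (tendsto_natCast_atTop_atTop.comp hnt))).const_mul _).mono_left h𝒰
  rw [mul_zero, zero_add] at hl2
  exact ge_of_tendsto hl2 (h𝒰 hev)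

theorem aux_low2 {X : Type*} [MetricSpace X] [CompactSpace X] [MeasurableSpace X] [BorelSpace X]
    (T : X → X) (hT : Continuous T) :
    mdimTop T ≤ (⨆ (μ : Measure X) (_ : IsProbabilityMeasure μ) (_ : MeasurePreserving T μ μ),
        Filter.liminf (fun ε : ℝ => infEntRate T μ ε / ENNReal.ofReal (Real.log (1 / ε)))
          (nhdsWithin 0 (Set.Ioi 0))) := by
  apply ENNReal.le_of_forall_nnreal_lt
  intro c hc
  rcases eq_or_ne c 0 with rfl | hc0
  · simp
  have hc0' : (0 : ℝ) < c := by exact_mod_cast pos_iff_ne_zero.2 hc0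
  unfold mdimTop at hc
  rw [lt_iSup_iff] at hc
  obtain ⟨α, hc⟩ := hc
  rw [lt_iSup_iff] at hc
  obtain ⟨hα, hc⟩ := hc
  have hev := eventually_lt_of_lt_liminf hc
  have hD : ∀ᶠ n : ℕ in atTop, (c : ℝ) * n ≤ Dcover (joinN T α n) := by
    filter_upwards [hev, eventually_gt_atTop 0] with n hn hn0
    have h1 := hn.le
    rw [ENNReal.le_div_iff_mul_le (by left; exact_mod_cast hn0.ne') (by left; simp)] at h1
    exact_mod_cast h1
  obtain ⟨μ, L, hμ, hμT, hL, h⟩ := aux_low1 T hT α hα c hc0' hD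
  refine le_trans ?_ (le_iSup_of_le μ (le_iSup_of_le hμ (le_iSup_of_le hμT le_rfl)))
  have hlog : Tendsto (fun ε : ℝ => Real.log (1 / ε)) (𝓝[>] 0) atTop := by
    simp only [one_div]
    exact Real.tendsto_log_atTop.comp tendsto_inv_nhdsGT_zero
  set K : ℝ := c * Real.log L + α.card * Real.log 2 with hK
  have hlim : Tendsto (fun ε : ℝ => ENNReal.ofReal (c - K / Real.log (1 / ε))) (𝓝[>] 0)
      (𝓝 (c : ℝ≥0∞)) := by
    have h1 : Tendsto (fun ε : ℝ => (c : ℝ) - K / Real.log (1 / ε)) (𝓝[>] 0) (𝓝 ((c : ℝ) - 0)) :=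
      tendsto_const_nhds.sub (tendsto_const_nhds.div_atTop hlog)
    rw [sub_zero] at h1
    have h2 := (ENNReal.continuous_ofReal.tendsto (c : ℝ)).comp h1
    rw [ENNReal.ofReal_coe_nnreal] at h2
    exact h2
  rw [← hlim.liminf_eq]
  refine liminf_le_liminf ?_
  have e1 : ∀ᶠ ε : ℝ in 𝓝[>] 0, L * ε ≤ 1 := by
    filter_upwards [Ioo_mem_nhdsGT (show (0 : ℝ) < L⁻¹ by positivity)] with ε hε
    have := mul_le_mul_of_nonneg_left hε.2.le hL.le
    rwa [mul_inv_cancel₀ hL.ne'] at this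
  filter_upwards [e1, self_mem_nhdsWithin, hlog.eventually_gt_atTop 0] with ε h1 h2 h3
  have h2 : (0 : ℝ) < ε := h2
  rw [ENNReal.le_div_iff_mul_le (by left; simpa using h3) (by left; simp),
    ← ENNReal.ofReal_mul' h3.le]
  have e : (c - K / Real.log (1 / ε)) * Real.log (1 / ε) =
      c * (- Real.log (L * ε)) - α.card * Real.log 2 := by
    rw [sub_mul, div_mul_cancel₀ _ h3.ne', hK, Real.log_mul hL.ne' h2.ne', one_div, Real.log_inv]
    ring
  rw [e]
  set hh : ℝ := c * (- Real.log (L * ε)) - α.card * Real.log 2 with hhh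
  unfold infEntRate
  refine le_iInf fun P => le_iInf fun hP => le_iInf fun hPd => ?_
  unfold entRate
  have hlim2 : Tendsto (fun m : ℕ => ENNReal.ofReal (hh - (Real.log 2 + 1) / m)) atTop
      (𝓝 (ENNReal.ofReal hh)) := by
    have h1 : Tendsto (fun m : ℕ => hh - (Real.log 2 + 1) / (m : ℝ)) atTop (𝓝 (hh - 0)) :=
      tendsto_const_nhds.sub (tendsto_const_nhds.div_atTop tendsto_natCast_atTop_atTop)
    rw [sub_zero] at h1
    exact (ENNReal.continuous_ofReal.tendsto _).comp h1
  rw [← hlim2.liminf_eq]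
  refine liminf_le_liminf ?_
  filter_upwards [eventually_gt_atTop 0] with m hm
  have hmR : (0 : ℝ) < m := by exact_mod_cast hm
  rw [ENNReal.le_div_iff_mul_le (by left; exact_mod_cast hm.ne') (by left; simp),
    ← ENNReal.ofReal_natCast, ← ENNReal.ofReal_mul' hmR.le]
  have hfin : entP μ (joinN T P m) ≠ ⊤ := by rw [aux_entP_eq]; exact ENNReal.ofReal_ne_top
  rw [ENNReal.ofReal_le_iff_le_toReal hfin, sub_mul, div_mul_cancel₀ _ hmR.ne']
  have := h ε h2 h1 P hP hPd m hm
  linarith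

theorem aux_ent_card {X B : Type*} [MeasurableSpace X] (μ : Measure X) [IsProbabilityMeasure μ]
    (J : Finset (Set X)) (hJ : IsFinPartition J) (code : X → B) (S : Finset B)
    (hS : ∀ x, code x ∈ S)
    (hcode : ∀ x y, code x = code y → ∀ s ∈ J, x ∈ s → y ∈ s) (K : ℝ) (hK : 0 < K)
    (hSK : (S.card : ℝ) ≤ K) :
    entP μ J ≤ ENNReal.ofReal (Real.log K) := by
  classical
  rw [aux_entP_eq]
  apply ENNReal.ofReal_le_ofReal
  set J' := J.filter (fun s => s.Nonempty) with hJ'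
  have hcard : J'.card ≤ S.card := by
    have hx : ∀ s : Set X, ∃ v : B, s ∈ J' → ∃ x ∈ s, code x = v := by
      intro s
      by_cases h : s ∈ J'
      · obtain ⟨x, hx⟩ := (Finset.mem_filter.1 h).2
        exact ⟨code x, fun _ => ⟨x, hx, rfl⟩⟩
      · obtain ⟨x0⟩ : Nonempty X := by
          by_contra h
          rw [not_nonempty_iff] at h
          have h1 := measure_univ (μ := μ)
          rw [Set.univ_eq_empty_iff.2 h, measure_empty] at h1
          exact zero_ne_one h1
        exact ⟨code x0, fun h' => absurd h' h⟩
    choose f hf using hx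
    apply Finset.card_le_card_of_injOn f
    · intro s hs
      obtain ⟨x, _, hx⟩ := hf s hs
      rw [← hx]; exact hS x
    · intro s hs s' hs' hss
      obtain ⟨x, hxs, hx⟩ := hf s hs
      obtain ⟨y, hys, hy⟩ := hf s' hs'
      have hsJ := (Finset.mem_filter.1 hs).1
      have hsJ' := (Finset.mem_filter.1 hs').1
      have h1 := hcode x y (by rw [hx, hy, hss]) s hsJ hxs
      by_contra hne
      exact Set.disjoint_left.1 (hJ.2.1 s hsJ s' hsJ' hne) h1 hys
  have hb : ∀ s ∈ J, -((μ s).toReal * Real.log ((μ s).toReal)) ≤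
      (μ s).toReal * (Real.log K - 1) + (if s.Nonempty then K⁻¹ else 0) := by
    intro s hs
    by_cases hne : s.Nonempty
    · rw [if_pos hne]
      rcases eq_or_lt_of_le (ENNReal.toReal_nonneg (a := μ s)) with h0 | h0
      · rw [← h0]; simp; positivity
      · set p := (μ s).toReal with hp
        have h1 := Real.log_le_sub_one_of_pos (show 0 < (K * p)⁻¹ by positivity)
        rw [Real.log_inv, Real.log_mul hK.ne' h0.ne'] at h1
        have h2 := mul_le_mul_of_nonneg_left h1 h0.le
        have h3 : p * ((K * p)⁻¹ - 1) = K⁻¹ - p := by field_simp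
        rw [h3] at h2
        linarith
    · rw [Set.not_nonempty_iff_eq_empty] at hne
      subst hne
      simp
  refine (Finset.sum_le_sum hb).trans ?_
  rw [Finset.sum_add_distrib, ← Finset.sum_mul, aux_part_sum μ J hJ, ← Finset.sum_filter,
    Finset.sum_const, nsmul_eq_mul]
  have h1 : (J'.card : ℝ) * K⁻¹ ≤ 1 := by
    rw [← div_eq_mul_inv, div_le_one hK]
    exact (by exact_mod_cast hcard : (J'.card : ℝ) ≤ S.card).trans hSK
  linarith

theorem aux_count_g (e n m B : ℕ) (he : 0 < e) (hn : 0 < n) :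
    (((Finset.univ : Finset (Fin m → Option (Fin e))).filter
      (fun g => (Finset.univ.filter (fun j => g j ≠ none)).card ≤ B)).card : ℝ) ≤
      ((n : ℝ) * e) ^ B * (1 + 1 / n) ^ m := by
  classical
  have heR : (0 : ℝ) < e := by exact_mod_cast he
  have hnR : (0 : ℝ) < n := by exact_mod_cast hn
  have he1 : (1 : ℝ) ≤ e := by exact_mod_cast he
  have hn1 : (1 : ℝ) ≤ n := by exact_mod_cast hn
  set t : ℝ := ((n : ℝ) * e)⁻¹ with ht
  have ht0 : 0 < t := by positivity
  have ht1 : t ≤ 1 := inv_le_one_of_one_le₀ (by nlinarith)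
  set w : Option (Fin e) → ℝ := fun o => if o ≠ none then t else 1 with hw
  have hsum : ∑ g : Fin m → Option (Fin e), ∏ j, w (g j) = (1 + 1 / n) ^ m := by
    have := Fintype.sum_pow w m
    rw [← this]
    congr 1
    rw [Fintype.sum_option]
    simp only [hw]
    simp
    rw [ht]; field_simp
  have hw0 : ∀ o, 0 ≤ w o := by
    intro o; simp only [hw]; split_ifs <;> positivity
  have h1 : (((Finset.univ : Finset (Fin m → Option (Fin e))).filter
      (fun g => (Finset.univ.filter (fun j => g j ≠ none)).card ≤ B)).card : ℝ) * t ^ B ≤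
      (1 + 1 / n) ^ m := by
    rw [← hsum, ← nsmul_eq_mul, ← Finset.sum_const]
    refine le_trans (Finset.sum_le_sum ?_) (Finset.sum_le_sum_of_subset_of_nonneg
      (Finset.filter_subset _ _) (fun g _ _ => Finset.prod_nonneg fun j _ => hw0 _))
    intro g hg
    have h2 := (Finset.mem_filter.1 hg).2
    simp only [hw]
    rw [← Finset.prod_filter, Finset.prod_const]
    exact pow_le_pow_of_le_one ht0.le ht1 h2
  rw [← le_div_iff₀ (by positivity)] at h1
  refine h1.trans (le_of_eq ?_)
  rw [ht, inv_pow, div_inv_eq_mul, mul_comm]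

theorem aux_label {X A : Type*} [MeasurableSpace X] [Fintype A] (ℓ : X → A)
    (hℓ : ∀ a, MeasurableSet (ℓ ⁻¹' {a})) :
    ∃ P : Finset (Set X), IsFinPartition P ∧ ∀ s ∈ P, ∃ a, s = ℓ ⁻¹' {a} := by
  classical
  refine ⟨Finset.univ.image (fun a => ℓ ⁻¹' {a}), ⟨?_, ?_, ?_⟩, ?_⟩
  · intro s hs
    obtain ⟨a, _, rfl⟩ := Finset.mem_image.1 hs
    exact hℓ a
  · intro s hs t ht hst
    obtain ⟨a, _, rfl⟩ := Finset.mem_image.1 hs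
    obtain ⟨b, _, rfl⟩ := Finset.mem_image.1 ht
    rw [Set.disjoint_left]
    intro x hx hy
    apply hst
    rw [Set.mem_preimage, Set.mem_singleton_iff] at hx hy
    rw [← hx, ← hy]
  · rw [Set.eq_univ_iff_forall]
    intro x
    exact ⟨ℓ ⁻¹' {ℓ x}, by simp, rfl⟩
  · intro s hs
    obtain ⟨a, _, rfl⟩ := Finset.mem_image.1 hs
    exact ⟨a, rfl⟩

theorem aux_marker {X : Type*} [MetricSpace X] [CompactSpace X] [MeasurableSpace X] [BorelSpace X]
    (T : X ≃ₜ X) (hmk : MarkerProperty T) (M : ℕ) (hM : 0 < M) :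
    ∃ (κ : X → ℕ) (L : ℕ), Measurable κ ∧ (∀ x, κ x ≤ L) ∧
      ∀ x, κ (T x) = κ x + 1 ∨ (κ (T x) = 0 ∧ M ≤ κ x) := by
  classical
  obtain ⟨U, hU, hUd, hUc⟩ := hmk M hM
  have hLI : ∀ k : ℕ, ∀ x, T^[k] (T.symm^[k] x) = x := fun k =>
    (Function.LeftInverse.iterate (g := T) (f := T.symm) T.apply_symm_apply k)
  have hLI' : ∀ k : ℕ, ∀ x, T.symm^[k] (T^[k] x) = x := fun k =>
    (Function.LeftInverse.iterate (g := T.symm) (f := T) T.symm_apply_apply k)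
  have hcov : ∀ x, ∃ a : ℕ, T.symm^[a] x ∈ U ∨ T^[a] x ∈ U := by
    intro x
    have := Set.eq_univ_iff_forall.1 hUc x
    rw [Set.mem_iUnion] at this
    obtain ⟨n, u, hu, rfl⟩ := this
    rcases n with k | k
    · refine ⟨k, Or.inl ?_⟩
      have : (T.toEquiv ^ (Int.ofNat k)) u = T^[k] u := by
        rw [Int.ofNat_eq_natCast, zpow_natCast, ← Equiv.Perm.iterate_eq_pow]; rfl
      rw [this, hLI']; exact hu
    · refine ⟨k + 1, Or.inr ?_⟩
      have : T^[k + 1] ((T.toEquiv ^ (Int.negSucc k)) u) = u := by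
        have h1 : (T : X → X)^[k + 1] = ⇑(T.toEquiv ^ (k + 1)) := by
          rw [← Equiv.Perm.iterate_eq_pow]; rfl
        rw [zpow_negSucc, h1]
        exact Equiv.apply_symm_apply _ _
      rw [this]; exact hu
  obtain ⟨t, ht⟩ := isCompact_univ.elim_finite_subcover
    (fun a : ℕ => {x | T.symm^[a] x ∈ U} ∪ {x | T^[a] x ∈ U})
    (fun a => (hU.preimage (T.symm.continuous.iterate a)).union
      (hU.preimage (T.continuous.iterate a)))
    (by
      intro x _
      rw [Set.mem_iUnion]
      exact hcov x)
  set N0 := t.sup id with hN0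
  have hex : ∀ x, ∃ k, k ≤ 2 * N0 ∧ T.symm^[k] x ∈ U := by
    intro x
    have := ht (mem_univ (T.symm^[N0] x))
    rw [Set.mem_iUnion₂] at this
    obtain ⟨a, ha, h⟩ := this
    have haN : a ≤ N0 := Finset.le_sup (f := id) ha
    rcases h with h | h
    · refine ⟨a + N0, by omega, ?_⟩
      rw [Function.iterate_add_apply]; exact h
    · refine ⟨N0 - a, by omega, ?_⟩
      have e : T.symm^[N0] x = T.symm^[a] (T.symm^[N0 - a] x) := by
        rw [← Function.iterate_add_apply]; congr 2; omega
      rw [Set.mem_ofPred_eq, e, hLI] at h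
      exact h
  have hex' : ∀ x, ∃ k, T.symm^[k] x ∈ U := fun x => (hex x).imp fun k h => h.2
  refine ⟨fun x => Nat.find (hex' x), 2 * N0, ?_, ?_, ?_⟩
  · exact measurable_find hex' (fun k => (hU.preimage (T.symm.continuous.iterate k)).measurableSet)
  · intro x
    obtain ⟨k, hk, hkU⟩ := hex x
    exact (Nat.find_min' (hex' x) hkU).trans hk
  · intro x
    have hstep : ∀ k, T.symm^[k + 1] (T x) = T.symm^[k] x := by
      intro k; rw [Function.iterate_succ_apply, T.symm_apply_apply]
    by_cases hTx : T x ∈ U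
    · right
      refine ⟨(Nat.find_eq_zero _).2 hTx, ?_⟩
      by_contra! hlt
      have hs := Nat.find_spec (hex' x)
      set k := Nat.find (hex' x) with hk
      have h1 := hUd (k + 1) (by omega) (by omega)
      have h2 : T x ∈ U ∩ (⇑T)^[k + 1] '' U := by
        refine ⟨hTx, _, hs, ?_⟩
        rw [Function.iterate_succ_apply', hLI]
      rw [h1] at h2
      exact h2
    · left
      rw [Nat.find_eq_iff]
      refine ⟨?_, ?_⟩
      · rw [hstep]; exact Nat.find_spec (hex' x)
      · intro j hj
        rcases j with _ | j
        · exact hTx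
        · rw [hstep]
          exact Nat.find_min (hex' x) (Nat.lt_of_succ_lt_succ hj)

theorem aux_idx {X : Type*} [MetricSpace X] [CompactSpace X] [MeasurableSpace X] [BorelSpace X]
    [Nonempty X] (T : X → X) (hT : Continuous T) (n : ℕ) (hn : 0 < n) (ε : ℝ) (hε : 0 < ε) :
    0 < spanNum T n ε univ ∧ ∃ idx : X → Fin (spanNum T n ε univ),
      (∀ b, MeasurableSet (idx ⁻¹' {b})) ∧
      ∀ x y, idx x = idx y → ∀ j < n, dist (T^[j] x) (T^[j] y) ≤ 2 * ε := by
  classical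
  have hne : {k | ∃ E : Finset X, E.card = k ∧ ∀ z ∈ (univ : Set X), ∃ y ∈ E, bowenDist T n z y < ε}.Nonempty := by
    obtain ⟨t, ht⟩ := aux_backup T hT n ε hε
    refine ⟨t.card, t, rfl, fun z _ => ?_⟩
    obtain ⟨y, hy, h⟩ := ht z
    refine ⟨y, hy, ?_⟩
    have : Nonempty (Fin n) := ⟨⟨0, hn⟩⟩
    obtain ⟨i, hi⟩ := exists_eq_ciSup_of_finite
      (f := fun j : Fin n => dist (T^[(j : ℕ)] z) (T^[(j : ℕ)] y))
    unfold bowenDist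
    rw [← hi]
    exact h i i.2
  obtain ⟨E, hEc, hE⟩ := Nat.sInf_mem hne
  have hEc' : E.card = spanNum T n ε univ := hEc
  have hE' : ∀ z, ∃ y ∈ E, ∀ j < n, dist (T^[j] z) (T^[j] y) < ε := by
    intro z
    obtain ⟨y, hy, h⟩ := hE z (mem_univ z)
    refine ⟨y, hy, fun j hj => lt_of_le_of_lt ?_ h⟩
    exact le_ciSup (f := fun j : Fin n => dist (T^[(j : ℕ)] z) (T^[(j : ℕ)] y))
      (Set.finite_range _).bddAbove ⟨j, hj⟩
  set e := spanNum T n ε univ with he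
  have hpos : 0 < e := by
    obtain ⟨x⟩ := ‹Nonempty X›
    obtain ⟨y, hy, _⟩ := hE' x
    rw [← hEc']; exact Finset.card_pos.2 ⟨y, hy⟩
  refine ⟨hpos, ?_⟩
  set f := (E.equivFinOfCardEq hEc').symm with hf
  have hex : ∀ x, ∃ i : ℕ, ∃ h : i < e, ∀ j < n, dist (T^[j] x) (T^[j] (f ⟨i, h⟩ : X)) < ε := by
    intro x
    obtain ⟨y, hy, h⟩ := hE' x
    refine ⟨(f.symm ⟨y, hy⟩ : Fin e), (f.symm ⟨y, hy⟩).2, ?_⟩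
    simpa using h
  have hmeas : Measurable (fun x => Nat.find (hex x)) := by
    apply measurable_find hex
    intro k
    by_cases hk : k < e
    · have : {x | ∃ h : k < e, ∀ j < n, dist (T^[j] x) (T^[j] (f ⟨k, h⟩ : X)) < ε} =
          ⋂ j ∈ Finset.range n, {x | dist (T^[j] x) (T^[j] (f ⟨k, hk⟩ : X)) < ε} := by
        ext x
        simp [hk]
      rw [this]
      exact (isOpen_biInter_finset fun j _ =>
        isOpen_lt ((hT.iterate j).dist continuous_const) continuous_const).measurableSet
    · have : {x | ∃ h : k < e, ∀ j < n, dist (T^[j] x) (T^[j] (f ⟨k, h⟩ : X)) < ε} = ∅ := by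
        ext x
        simp [hk]
      rw [this]; exact MeasurableSet.empty
  refine ⟨fun x => ⟨Nat.find (hex x), (Nat.find_spec (hex x)).1⟩, ?_, ?_⟩
  · intro b
    have : (fun x => (⟨Nat.find (hex x), (Nat.find_spec (hex x)).1⟩ : Fin e)) ⁻¹' {b} =
        (fun x => Nat.find (hex x)) ⁻¹' {(b : ℕ)} := by
      ext x; simp [Fin.ext_iff]
    rw [this]
    exact hmeas (measurableSet_singleton _)
  · intro x y hxy j hj
    have h1 := (Nat.find_spec (hex x)).2 j hj
    have h2 := (Nat.find_spec (hex y)).2 j hj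
    have hxy' := congrArg (fun z => (f z : X)) hxy
    simp only at hxy'
    rw [← hxy'] at h2
    have h3 := dist_triangle_right (T^[j] x) (T^[j] y)
      (T^[j] (f ⟨Nat.find (hex x), (Nat.find_spec (hex x)).1⟩ : X))
    linarith

theorem aux_mod (q n : ℕ) (hn : 0 < n) :
    ((q + 1) % n = 0 ∧ q % n + 1 = n) ∨ (q + 1) % n = q % n + 1 := by
  have h := Nat.mod_lt q hn
  rw [← Nat.mod_add_mod]
  rcases Nat.lt_or_ge (q % n + 1) n with h1 | h1
  · right; exact Nat.mod_eq_of_lt h1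
  · left
    have : q % n + 1 = n := by omega
    exact ⟨by rw [this, Nat.mod_self], this⟩

theorem aux_up0 {X : Type*} [MetricSpace X] [CompactSpace X] [MeasurableSpace X] [BorelSpace X]
    (T : X ≃ₜ X) (hmk : MarkerProperty T) (μ : Measure X) [IsProbabilityMeasure μ] (ε : ℝ)
    (hε : 0 < ε) (n : ℕ) (hn : 0 < n) :
    0 < spanNum T n ε univ ∧ ∃ (P : Finset (Set X)) (L : ℕ), IsFinPartition P ∧
      (∀ s ∈ P, Metric.diam s ≤ 2 * ε) ∧
      ∀ m : ℕ, entP μ (joinN T P m) ≤ ENNReal.ofReal ((3 + L / n ^ 2) *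
          Real.log (n * spanNum T n ε univ) +
        m * ((1 + 1 / n) / n * Real.log (n * spanNum T n ε univ) + 1 / n)) := by
  classical
  have hXne : Nonempty X := by
    by_contra h
    rw [not_nonempty_iff] at h
    have h1 := measure_univ (μ := μ)
    rw [Set.univ_eq_empty_iff.2 h, measure_empty] at h1
    exact zero_ne_one h1
  have H := aux_idx T T.continuous n hn ε hε
  generalize spanNum T n ε univ = e at H ⊢
  obtain ⟨hepos, idx, hidxm, hidx⟩ := H
  refine ⟨hepos, ?_⟩
  obtain ⟨κ, L, hκm, hκL, hκ⟩ := aux_marker T hmk (n ^ 2) (by positivity)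
  have hLI : ∀ k : ℕ, ∀ x, T^[k] (T.symm^[k] x) = x := fun k =>
    (Function.LeftInverse.iterate (g := T) (f := T.symm) T.apply_symm_apply k)
  set ℓ : X → Fin n × Fin e := fun x =>
    (⟨κ x % n, Nat.mod_lt _ hn⟩, idx (T.symm^[κ x % n] x)) with hℓ
  have hℓm : ∀ a, MeasurableSet (ℓ ⁻¹' {a}) := by
    rintro ⟨a, b⟩
    have : ℓ ⁻¹' {(a, b)} = (fun x => κ x % n) ⁻¹' {(a : ℕ)} ∩
        (T.symm^[(a : ℕ)]) ⁻¹' (idx ⁻¹' {b}) := by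
      ext x
      simp only [hℓ, mem_preimage, mem_singleton_iff, Prod.mk.injEq, mem_inter_iff, Fin.ext_iff]
      constructor
      · rintro ⟨h1, h2⟩
        exact ⟨h1, by rw [← h1]; exact h2⟩
      · rintro ⟨h1, h2⟩
        exact ⟨h1, by rw [h1]; exact h2⟩
    rw [this]
    refine MeasurableSet.inter ?_ ((T.symm.continuous.iterate _).measurable (hidxm b))
    exact ((measurable_from_top (f := fun k : ℕ => k % n)).comp hκm) (measurableSet_singleton _)
  obtain ⟨P, hP, hPℓ⟩ := aux_label ℓ hℓm
  refine ⟨P, L, hP, ?_, ?_⟩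
  · intro s hs
    obtain ⟨a, rfl⟩ := hPℓ s hs
    apply Metric.diam_le_of_forall_dist_le (by positivity)
    intro x hx y hy
    have hxy : ℓ x = ℓ y := by
      rw [mem_preimage, mem_singleton_iff] at hx hy; rw [hx, hy]
    simp only [hℓ, Prod.mk.injEq, Fin.mk.injEq] at hxy
    obtain ⟨h1, h2⟩ := hxy
    rw [← h1] at h2
    have := hidx _ _ h2 (κ x % n) (Nat.mod_lt _ hn)
    rwa [hLI, hLI] at this
  intro m
  have hstep : ∀ z, κ (T z) % n ≠ 0 → κ (T z) % n = κ z % n + 1 := by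
    intro z hz
    rcases hκ z with h | ⟨h, _⟩
    · rw [h] at hz ⊢
      rcases aux_mod (κ z) n hn with h1 | h1
      · exact absurd h1.1 hz
      · exact h1
    · rw [h] at hz; simp at hz
  have hℓstep : ∀ z w, κ (T z) % n ≠ 0 → κ (T w) % n ≠ 0 → ℓ z = ℓ w → ℓ (T z) = ℓ (T w) := by
    intro z w hz hw hzw
    simp only [hℓ, Prod.mk.injEq, Fin.mk.injEq] at hzw ⊢
    rw [hstep z hz, hstep w hw, Function.iterate_succ_apply, Function.iterate_succ_apply,
      T.symm_apply_apply, T.symm_apply_apply]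
    exact ⟨by rw [hzw.1], hzw.2⟩
  set gg : X → Fin m → Option (Fin e) := fun x j =>
    if κ (T^[(j : ℕ)] x) % n = 0 then some (idx (T^[(j : ℕ)] x)) else none with hgg
  have hdet : ∀ x y, ℓ x = ℓ y → gg x = gg y → ∀ j < m, ℓ (T^[j] x) = ℓ (T^[j] y) := by
    intro x y h1 h2 j
    induction j with
    | zero => intro _; exact h1
    | succ j ih =>
      intro hj
      have h3 := ih (by omega)
      have h4 := congrFun h2 ⟨j + 1, hj⟩
      simp only [hgg] at h4
      rw [Function.iterate_succ_apply', Function.iterate_succ_apply'] at h4 ⊢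
      by_cases hx : κ (T (T^[j] x)) % n = 0
      · by_cases hy : κ (T (T^[j] y)) % n = 0
        · rw [if_pos hx, if_pos hy, Option.some.injEq] at h4
          simp only [hℓ, hx, hy, Function.iterate_zero, id, h4]
        · rw [if_pos hx, if_neg hy] at h4; exact absurd h4 (by simp)
      · by_cases hy : κ (T (T^[j] y)) % n = 0
        · rw [if_neg hx, if_pos hy] at h4; exact absurd h4 (by simp)
        · exact hℓstep _ _ hx hy h3
  -- counting the starts
  have hpot : ∀ z, (if κ (T z) % n = 0 then n * n ^ 2 else 0) + (n ^ 2 * (κ (T z) % n) + n * κ (T z))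
      ≤ (n ^ 2 * (κ z % n) + n * κ z) + (n ^ 2 + n) := by
    intro z
    rcases hκ z with h | ⟨h, h'⟩
    · by_cases h0 : κ (T z) % n = 0
      · rw [if_pos h0, h0, h]
        have h1 : n ≤ κ z % n + 1 := by
          rw [h] at h0
          rcases aux_mod (κ z) n hn with h1 | h1
          · exact h1.2.ge
          · omega
        nlinarith
      · rw [if_neg h0, hstep z h0, h]
        nlinarith
    · rw [h]; simp
      nlinarith [Nat.zero_le (n ^ 2 * (κ z % n))]
  have hcnt : ∀ x : X, ∀ k : ℕ, ∑ j ∈ Finset.range (k + 1),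
      (if κ (T^[j] x) % n = 0 then n * n ^ 2 else 0) +
        (n ^ 2 * (κ (T^[k] x) % n) + n * κ (T^[k] x)) ≤
      n * n ^ 2 + (n ^ 2 * (κ x % n) + n * κ x) + k * (n ^ 2 + n) := by
    intro x k
    induction k with
    | zero =>
      simp only [zero_add, Finset.sum_range_one, Function.iterate_zero, id, zero_mul, add_zero]
      have h0 : (if κ x % n = 0 then n * n ^ 2 else 0) ≤ n * n ^ 2 := by
        by_cases h : κ x % n = 0
        · rw [if_pos h]
        · rw [if_neg h]; exact Nat.zero_le _
      exact Nat.add_le_add_right h0 _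
    | succ k ih =>
      rw [Finset.sum_range_succ, Function.iterate_succ_apply']
      have := hpot (T^[k] x)
      nlinarith
  set B : ℕ := (2 * n ^ 3 + n * L + m * (n ^ 2 + n)) / n ^ 3 with hB
  have hsupp : ∀ x, (Finset.univ.filter (fun j => gg x j ≠ none)).card ≤ B := by
    intro x
    rw [hB, Nat.le_div_iff_mul_le (by positivity)]
    have h1 := hcnt x m
    rw [Finset.sum_range_succ] at h1
    have h2 : (Finset.univ.filter (fun j => gg x j ≠ none)).card * n ^ 3 =
        ∑ j ∈ Finset.range m, (if κ (T^[j] x) % n = 0 then n * n ^ 2 else 0) := by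
      rw [Finset.card_filter, Finset.sum_range, Finset.sum_mul]
      apply Finset.sum_congr rfl
      intro j _
      simp only [hgg]
      by_cases h : κ (T^[(j : ℕ)] x) % n = 0
      · simp [h]; ring
      · simp [h]
    rw [h2]
    have h3 : n ^ 2 * (κ x % n) ≤ n ^ 2 * n := Nat.mul_le_mul_left _ (Nat.mod_lt _ hn).le
    have h4 : n * κ x ≤ n * L := Nat.mul_le_mul_left _ (hκL x)
    have h5 : n * n ^ 2 = n ^ 3 := by ring
    have h6 : n ^ 2 * n = n ^ 3 := by ring
    omega
  set S := (Finset.univ : Finset (Fin n × Fin e)) ×ˢ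
    ((Finset.univ : Finset (Fin m → Option (Fin e))).filter
      (fun g => (Finset.univ.filter (fun j => g j ≠ none)).card ≤ B)) with hS
  have hnR : (0 : ℝ) < n := by exact_mod_cast hn
  have heR : (0 : ℝ) < e := by exact_mod_cast hepos
  have hSc : (S.card : ℝ) ≤ (n * e) * ((n * e) ^ B * (1 + 1 / n) ^ m) := by
    rw [hS, Finset.card_product]
    push_cast
    have := aux_count_g e n m B hepos hn
    have h1 : ((Finset.univ : Finset (Fin n × Fin e)).card : ℝ) = n * e := by
      simp
    rw [h1]
    gcongr
  refine (aux_ent_card μ (joinN T P m) (aux_join_part T T.continuous.measurable P hP m)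
    (fun x => (ℓ x, gg x)) S ?_ ?_ _ (by positivity) hSc).trans ?_
  · intro x
    rw [hS, Finset.mem_product]
    exact ⟨Finset.mem_univ _, Finset.mem_filter.2 ⟨Finset.mem_univ _, hsupp x⟩⟩
  · intro x y hxy s hs hx
    rw [Prod.mk.injEq] at hxy
    obtain ⟨f, hf, rfl⟩ := (aux_join_mem T P m _).1 hs
    rw [Set.mem_iInter] at hx ⊢
    intro j
    obtain ⟨a, ha⟩ := hPℓ _ (hf j)
    have h1 := hx j
    rw [mem_preimage, ha, mem_preimage, mem_singleton_iff] at h1 ⊢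
    rw [← hdet x y hxy.1 hxy.2 j j.2]; exact h1
  · apply ENNReal.ofReal_le_ofReal
    have hne : (0 : ℝ) < n * e := by positivity
    have hKlog : Real.log ((n * e) * (((n : ℝ) * e) ^ B * (1 + 1 / n) ^ m)) =
        Real.log (n * e) + (B * Real.log (n * e) + m * Real.log (1 + 1 / n)) := by
      generalize (n : ℝ) * e = v at hne
      rw [Real.log_mul hne.ne' (by positivity), Real.log_mul (by positivity) (by positivity),
        Real.log_pow, Real.log_pow]
    rw [hKlog]
    have hlog0 : 0 ≤ Real.log (n * e) := by
      apply Real.log_nonneg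
      exact_mod_cast Nat.mul_pos hn hepos
    have hl1 : Real.log (1 + 1 / n) ≤ 1 / (n : ℝ) := by
      have := Real.log_le_sub_one_of_pos (show (0 : ℝ) < 1 + 1 / n by positivity)
      linarith
    have hBR : (B : ℝ) ≤ 2 + L / n ^ 2 + m * ((1 + 1 / n) / n) := by
      have : (B : ℝ) ≤ ((2 * n ^ 3 + n * L + m * (n ^ 2 + n) : ℕ) : ℝ) / ((n ^ 3 : ℕ) : ℝ) :=
        Nat.cast_div_le
      refine this.trans (le_of_eq ?_)
      push_cast
      field_simp
    have h1 := mul_le_mul_of_nonneg_right hBR hlog0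
    have h2 := mul_le_mul_of_nonneg_left hl1 (Nat.cast_nonneg (α := ℝ) m)
    nlinarith

theorem aux_up1 {X : Type*} [MetricSpace X] [CompactSpace X] [MeasurableSpace X] [BorelSpace X]
    (T : X ≃ₜ X) (hmk : MarkerProperty T) (μ : Measure X) [IsProbabilityMeasure μ] (ε : ℝ)
    (hε : 0 < ε) (n : ℕ) (hn : 0 < n) :
    infEntRate T μ (2 * ε) ≤ ENNReal.ofReal (1 + 1 / n) *
      (ENNReal.ofReal (Real.log (spanNum T n ε univ)) / n) +
      ENNReal.ofReal ((1 + 1 / n) * (Real.log n / n) + 1 / n) := by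
  obtain ⟨hepos, P, L, hP, hPd, hent⟩ := aux_up0 T hmk μ ε hε n hn
  set e := spanNum T n ε univ with he
  have hnR : (0 : ℝ) < n := by exact_mod_cast hn
  have heR : (0 : ℝ) < e := by exact_mod_cast hepos
  have hn1 : (1 : ℝ) ≤ n := by exact_mod_cast hn
  have he1 : (1 : ℝ) ≤ e := by exact_mod_cast hepos
  have hle := Real.log_nonneg he1
  have hln := Real.log_nonneg hn1
  set R : ℝ := (1 + 1 / n) / n * Real.log (n * e) + 1 / n with hR
  set C : ℝ := (3 + L / n ^ 2) * Real.log (n * e) with hC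
  have h1 : infEntRate T μ (2 * ε) ≤ ENNReal.ofReal R := by
    refine (iInf_le_of_le P (iInf_le_of_le hP (iInf_le_of_le hPd le_rfl))).trans ?_
    unfold entRate
    have hlim : Tendsto (fun m : ℕ => ENNReal.ofReal (C / m + R)) atTop (𝓝 (ENNReal.ofReal R)) := by
      have h1 : Tendsto (fun m : ℕ => C / (m : ℝ) + R) atTop (𝓝 (0 + R)) :=
        (tendsto_const_nhds.div_atTop tendsto_natCast_atTop_atTop).add tendsto_const_nhds
      rw [zero_add] at h1
      exact (ENNReal.continuous_ofReal.tendsto _).comp h1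
    rw [← hlim.liminf_eq]
    refine liminf_le_liminf ?_
    filter_upwards [eventually_gt_atTop 0] with m hm
    have hmR : (0 : ℝ) < m := by exact_mod_cast hm
    have h3 : C / m + R = (C + m * R) / m := by field_simp
    rw [h3, ENNReal.ofReal_div_of_pos hmR, ENNReal.ofReal_natCast]
    gcongr
    exact hent m
  refine h1.trans (le_of_eq ?_)
  have h4 : ENNReal.ofReal (Real.log e) / n = ENNReal.ofReal (Real.log e / n) := by
    rw [ENNReal.ofReal_div_of_pos hnR, ENNReal.ofReal_natCast]
  rw [h4, ← ENNReal.ofReal_mul (by positivity), ← ENNReal.ofReal_add (by positivity) (by positivity)]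
  congr 1
  rw [hR, Real.log_mul hnR.ne' heR.ne']
  ring

theorem aux_up2 {X : Type*} [MetricSpace X] [CompactSpace X] [MeasurableSpace X] [BorelSpace X]
    (T : X ≃ₜ X) (hmk : MarkerProperty T) (μ : Measure X) [IsProbabilityMeasure μ] (ε : ℝ)
    (hε : 0 < ε) : infEntRate T μ (2 * ε) ≤ spanGrowth T ε := by
  apply le_of_forall_gt_imp_ge_of_dense
  intro b hb
  rcases eq_or_ne b ⊤ with rfl | hbt
  · exact le_top
  have hev := eventually_lt_of_limsup_lt hb
  have hinv : Tendsto (fun n : ℕ => 1 + 1 / (n : ℝ)) atTop (𝓝 (1 + 0)) :=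
    tendsto_const_nhds.add tendsto_one_div_atTop_nhds_zero_nat
  have hlogn : Tendsto (fun n : ℕ => Real.log n / (n : ℝ)) atTop (𝓝 0) := by
    have := Real.isLittleO_log_id_atTop.tendsto_div_nhds_zero.comp tendsto_natCast_atTop_atTop (α := ℕ)
    exact this
  rw [add_zero] at hinv
  have h1 : Tendsto (fun n : ℕ => ENNReal.ofReal (1 + 1 / n) * b +
      ENNReal.ofReal ((1 + 1 / n) * (Real.log n / n) + 1 / n)) atTop
      (𝓝 (ENNReal.ofReal 1 * b + ENNReal.ofReal (1 * 0 + 0))) := by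
    refine Tendsto.add ?_ ?_
    · refine ENNReal.Tendsto.mul_const ?_ (Or.inr hbt)
      exact (ENNReal.continuous_ofReal.tendsto _).comp hinv
    · exact (ENNReal.continuous_ofReal.tendsto _).comp
        ((hinv.mul hlogn).add tendsto_one_div_atTop_nhds_zero_nat)
  simp only [ENNReal.ofReal_one, one_mul, add_zero, ENNReal.ofReal_zero] at h1
  refine ge_of_tendsto h1 ?_
  filter_upwards [hev, eventually_gt_atTop 0] with n hn hn0
  refine (aux_up1 T hmk μ ε hε n hn0).trans ?_
  gcongr

theorem aux_logtend : Tendsto (fun ε : ℝ => Real.log (1 / ε)) (𝓝[>] 0) atTop := by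
  simp only [one_div]
  exact Real.tendsto_log_atTop.comp tendsto_inv_nhdsGT_zero

theorem aux_scale (a : ℝ) (ha : 0 < a) :
    Tendsto (fun δ : ℝ => a * δ) (𝓝[>] 0) (𝓝[>] 0) := by
  refine tendsto_nhdsWithin_of_tendsto_nhds_of_eventually_within _ ?_ ?_
  · have : Tendsto (fun δ : ℝ => a * δ) (𝓝 0) (𝓝 (a * 0)) :=
      (continuous_const.mul continuous_id).tendsto 0
    rw [mul_zero] at this
    exact this.mono_left nhdsWithin_le_nhds
  · filter_upwards [self_mem_nhdsWithin] with δ hδ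
    exact mul_pos ha hδ

theorem aux_ratio (b b' : ℝ≥0∞) (hb : b < b') :
    ∀ᶠ δ : ℝ in 𝓝[>] 0, ∀ g : ℝ≥0∞, g / ENNReal.ofReal (Real.log (1 / δ)) ≤ b →
      g / ENNReal.ofReal (Real.log (1 / (2 * δ))) ≤ b' := by
  have hbt : b ≠ ⊤ := hb.ne_top
  have hl2 : Tendsto (fun δ : ℝ => Real.log (1 / (2 * δ))) (𝓝[>] 0) atTop :=
    aux_logtend.comp (aux_scale 2 two_pos)
  have hρ : Tendsto (fun δ : ℝ => 1 + Real.log 2 / Real.log (1 / (2 * δ))) (𝓝[>] 0)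
      (𝓝 (1 + 0)) := tendsto_const_nhds.add (tendsto_const_nhds.div_atTop hl2)
  rw [add_zero] at hρ
  have h1 : Tendsto (fun δ : ℝ => ENNReal.ofReal (1 + Real.log 2 / Real.log (1 / (2 * δ))) * b)
      (𝓝[>] 0) (𝓝 (ENNReal.ofReal 1 * b)) :=
    ENNReal.Tendsto.mul_const ((ENNReal.continuous_ofReal.tendsto _).comp hρ) (Or.inr hbt)
  rw [ENNReal.ofReal_one, one_mul] at h1
  filter_upwards [h1.eventually_lt_const hb, hl2.eventually_gt_atTop 0,
    aux_logtend.eventually_gt_atTop 0, self_mem_nhdsWithin] with δ h2 h3 h4 h5 g hg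
  have h5 : (0 : ℝ) < δ := h5
  rw [ENNReal.div_le_iff (by simpa using h4) (by simp)] at hg
  rw [ENNReal.div_le_iff (by simpa using h3) (by simp)]
  refine hg.trans ?_
  have e : Real.log (1 / δ) = (1 + Real.log 2 / Real.log (1 / (2 * δ))) * Real.log (1 / (2 * δ)) := by
    rw [add_mul, div_mul_cancel₀ _ h3.ne', one_div, one_div, Real.log_inv, Real.log_inv,
      Real.log_mul two_ne_zero h5.ne']
    ring
  rw [e, ENNReal.ofReal_mul' h3.le, ← mul_assoc]
  gcongr
  rw [mul_comm]; exact h2.le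

theorem aux_limsup (F G : ℝ → ℝ≥0∞) (h : ∀ ε : ℝ, 0 < ε → F (2 * ε) ≤ G ε) :
    limsup (fun ε : ℝ => F ε / ENNReal.ofReal (Real.log (1 / ε))) (𝓝[>] 0) ≤
      limsup (fun ε : ℝ => G ε / ENNReal.ofReal (Real.log (1 / ε))) (𝓝[>] 0) := by
  apply le_of_forall_gt_imp_ge_of_dense
  intro b' hb'
  obtain ⟨b, hb, hbb'⟩ := exists_between hb'
  have hev := eventually_lt_of_limsup_lt hb
  have h2 := (hev.and (aux_ratio b b' hbb')).and self_mem_nhdsWithin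
  have h3 := (aux_scale (1 / 2) (by norm_num)).eventually h2
  refine limsup_le_of_le (by isBoundedDefault) ?_
  filter_upwards [h3] with ε hε
  obtain ⟨⟨h4, h5⟩, h6⟩ := hε
  have e : 2 * (1 / 2 * ε) = ε := by ring
  have h7 := h5 _ h4.le
  have h8 := h _ h6
  rw [e] at h7 h8
  exact (ENNReal.div_le_div_right h8 _).trans h7

theorem aux_liminf (F G : ℝ → ℝ≥0∞) (h : ∀ ε : ℝ, 0 < ε → F (2 * ε) ≤ G ε) :
    liminf (fun ε : ℝ => F ε / ENNReal.ofReal (Real.log (1 / ε))) (𝓝[>] 0) ≤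
      liminf (fun ε : ℝ => G ε / ENNReal.ofReal (Real.log (1 / ε))) (𝓝[>] 0) := by
  apply le_of_forall_gt_imp_ge_of_dense
  intro b' hb'
  obtain ⟨b, hb, hbb'⟩ := exists_between hb'
  have hfr := frequently_lt_of_liminf_lt (by isBoundedDefault) hb
  have h2 := hfr.and_eventually ((aux_ratio b b' hbb').and self_mem_nhdsWithin)
  refine liminf_le_of_frequently_le' ?_
  refine (aux_scale 2 two_pos).frequently (h2.mono ?_)
  rintro δ ⟨h4, h5, h6⟩
  exact (ENNReal.div_le_div_right (h _ h6) _).trans (h5 _ h4.le)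
theorem aux_final {X : Type*} [MetricSpace X] [CompactSpace X] [MeasurableSpace X] [BorelSpace X]
    (T : X ≃ₜ X) (hmk : MarkerProperty T)
    (hd : mdimTop (⇑T) = mdimMUpper (⇑T)) :
    mdimMLower (⇑T) = mdimMUpper (⇑T) ∧
    mdimMUpper (⇑T) =
      (⨆ (μ : Measure X) (_ : IsProbabilityMeasure μ) (_ : MeasurePreserving (⇑T) μ μ),
        Filter.liminf (fun ε : ℝ => infEntRate (⇑T) μ ε / ENNReal.ofReal (Real.log (1 / ε)))
          (nhdsWithin 0 (Set.Ioi 0))) ∧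
    mdimMUpper (⇑T) =
      (⨆ (μ : Measure X) (_ : IsProbabilityMeasure μ) (_ : MeasurePreserving (⇑T) μ μ),
        Filter.limsup (fun ε : ℝ => infEntRate (⇑T) μ ε / ENNReal.ofReal (Real.log (1 / ε)))
          (nhdsWithin 0 (Set.Ioi 0))) ∧
    mdimMUpper (⇑T) =
      Filter.liminf (fun ε : ℝ =>
        (⨆ (μ : Measure X) (_ : IsProbabilityMeasure μ) (_ : MeasurePreserving (⇑T) μ μ),
          infEntRate (⇑T) μ ε) / ENNReal.ofReal (Real.log (1 / ε)))
        (nhdsWithin 0 (Set.Ioi 0)) ∧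
    mdimMUpper (⇑T) =
      Filter.limsup (fun ε : ℝ =>
        (⨆ (μ : Measure X) (_ : IsProbabilityMeasure μ) (_ : MeasurePreserving (⇑T) μ μ),
          infEntRate (⇑T) μ ε) / ENNReal.ofReal (Real.log (1 / ε)))
        (nhdsWithin 0 (Set.Ioi 0)) := by
  set V : ℝ → ℝ≥0∞ := fun ε =>
    ⨆ (μ : Measure X) (_ : IsProbabilityMeasure μ) (_ : MeasurePreserving (⇑T) μ μ),
          infEntRate (⇑T) μ ε with hV
  have hVG : ∀ ε : ℝ, 0 < ε → V (2 * ε) ≤ spanGrowth T ε := by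
    intro ε hε
    exact iSup_le fun μ => iSup_le fun hμ => iSup_le fun _ => aux_up2 T hmk μ ε hε
  have hle : ∀ (μ : Measure X), IsProbabilityMeasure μ → MeasurePreserving (⇑T) μ μ → ∀ ε,
      infEntRate T μ ε ≤ V ε := fun μ h1 h2 ε =>
    le_iSup_of_le μ (le_iSup_of_le h1 (le_iSup_of_le h2 le_rfl))
  have hA := aux_low2 T T.continuous
  have hL1 : liminf (fun ε : ℝ => V ε / ENNReal.ofReal (Real.log (1 / ε))) (𝓝[>] 0) ≤
      mdimMLower T := aux_liminf V _ hVG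
  have hL2 : limsup (fun ε : ℝ => V ε / ENNReal.ofReal (Real.log (1 / ε))) (𝓝[>] 0) ≤
      mdimMUpper T := aux_limsup V _ hVG
  have hm : mdimMLower T ≤ mdimMUpper T := liminf_le_limsup
  have hS12 : (⨆ (μ : Measure X) (_ : IsProbabilityMeasure μ) (_ : MeasurePreserving (⇑T) μ μ),
        Filter.liminf (fun ε : ℝ => infEntRate (⇑T) μ ε / ENNReal.ofReal (Real.log (1 / ε)))
          (nhdsWithin 0 (Set.Ioi 0))) ≤
      (⨆ (μ : Measure X) (_ : IsProbabilityMeasure μ) (_ : MeasurePreserving (⇑T) μ μ),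
        Filter.limsup (fun ε : ℝ => infEntRate (⇑T) μ ε / ENNReal.ofReal (Real.log (1 / ε)))
          (nhdsWithin 0 (Set.Ioi 0))) :=
    iSup_mono fun μ => iSup_mono fun _ => iSup_mono fun _ => liminf_le_limsup
  have hS1 : (⨆ (μ : Measure X) (_ : IsProbabilityMeasure μ) (_ : MeasurePreserving (⇑T) μ μ),
        Filter.liminf (fun ε : ℝ => infEntRate (⇑T) μ ε / ENNReal.ofReal (Real.log (1 / ε)))
          (nhdsWithin 0 (Set.Ioi 0))) ≤
      liminf (fun ε : ℝ => V ε / ENNReal.ofReal (Real.log (1 / ε))) (𝓝[>] 0) :=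
    iSup_le fun μ => iSup_le fun h1 => iSup_le fun h2 => liminf_le_liminf
      (Eventually.of_forall fun ε => ENNReal.div_le_div_right (hle μ h1 h2 ε) _)
  have hS2 : (⨆ (μ : Measure X) (_ : IsProbabilityMeasure μ) (_ : MeasurePreserving (⇑T) μ μ),
        Filter.limsup (fun ε : ℝ => infEntRate (⇑T) μ ε / ENNReal.ofReal (Real.log (1 / ε)))
          (nhdsWithin 0 (Set.Ioi 0))) ≤
      limsup (fun ε : ℝ => V ε / ENNReal.ofReal (Real.log (1 / ε))) (𝓝[>] 0) :=
    iSup_le fun μ => iSup_le fun h1 => iSup_le fun h2 => limsup_le_limsup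
      (Eventually.of_forall fun ε => ENNReal.div_le_div_right (hle μ h1 h2 ε) _)
  rw [hd] at hA
  refine ⟨le_antisymm hm ?_, le_antisymm hA ?_, le_antisymm (hA.trans hS12) (hS2.trans hL2),
    le_antisymm (hA.trans hS1) (hL1.trans hm), le_antisymm ((hA.trans hS12).trans hS2) hL2⟩
  · exact (hA.trans hS1).trans hL1
  · exact (hS1.trans hL1).trans hm

/-- Theorem 1.2 (second part): if `(X,T)` has the marker property and `d` is a compatible
metric with `mdim(X,T) = mdim_M^+(T,X,d)`, then the lower and upper metric mean dimensions
coincide and are given by the (exchangeable) sup/liminf and sup/limsup variational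
expressions in terms of Rényi information dimension. -/
theorem stmt13 {X : Type*} [MetricSpace X] [CompactSpace X] [MeasurableSpace X] [BorelSpace X]
    (T : X ≃ₜ X) (hmk : MarkerProperty T)
    (hd : mdimTop (⇑T) = mdimMUpper (⇑T)) :
    mdimMLower (⇑T) = mdimMUpper (⇑T) ∧
    mdimMUpper (⇑T) =
      (⨆ (μ : Measure X) (_ : IsProbabilityMeasure μ) (_ : MeasurePreserving (⇑T) μ μ),
        Filter.liminf (fun ε : ℝ => infEntRate (⇑T) μ ε / ENNReal.ofReal (Real.log (1 / ε)))
          (nhdsWithin 0 (Set.Ioi 0))) ∧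
    mdimMUpper (⇑T) =
      (⨆ (μ : Measure X) (_ : IsProbabilityMeasure μ) (_ : MeasurePreserving (⇑T) μ μ),
        Filter.limsup (fun ε : ℝ => infEntRate (⇑T) μ ε / ENNReal.ofReal (Real.log (1 / ε)))
          (nhdsWithin 0 (Set.Ioi 0))) ∧
    mdimMUpper (⇑T) =
      Filter.liminf (fun ε : ℝ =>
        (⨆ (μ : Measure X) (_ : IsProbabilityMeasure μ) (_ : MeasurePreserving (⇑T) μ μ),
          infEntRate (⇑T) μ ε) / ENNReal.ofReal (Real.log (1 / ε)))
        (nhdsWithin 0 (Set.Ioi 0)) ∧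
    mdimMUpper (⇑T) =
      Filter.limsup (fun ε : ℝ =>
        (⨆ (μ : Measure X) (_ : IsProbabilityMeasure μ) (_ : MeasurePreserving (⇑T) μ μ),
          infEntRate (⇑T) μ ε) / ENNReal.ofReal (Real.log (1 / ε)))
        (nhdsWithin 0 (Set.Ioi 0)) := by
  exact aux_final T hmk hd
end
end

section
/- Let X=[0,1]^ℤ with the metric d(x,y)=Σ_{n∈ℤ} 2^{−|n|}|x_n−y_n|, let σ:X→X be the left shift, and let μ=L^{⊗ℤ} be the product of Lebesgue measure on [0,1]. Then the upper and lower metric mean dimensions of (X,σ,d) both equal 1, and lim_{ε→0} (1/log(1/ε)) · inf{ h_μ(σ,P) : P a finite Borel partition of X with diam P ≤ ε } = 1; in particular the metric mean dimension equals the Rényi information dimension of μ. -/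
open Filter MeasureTheory Set
open scoped ENNReal Topology

noncomputable section

open MMD

abbrev QX := ℤ → unitInterval

def shf : QX → QX := fun x n => x (n + 1)

lemma shf_iter (j : ℕ) (x : QX) (k : ℤ) : (shf^[j] x) k = x (k + j) := by
  induction j generalizing x with
  | zero => simp
  | succ j ih =>
    rw [Function.iterate_succ_apply, ih]
    simp only [shf]
    congr 1
    push_cast
    ring

def wt (n : ℤ) : ℝ := (2 : ℝ) ^ (-|n| : ℤ)

lemma wt_pos (n : ℤ) : 0 < wt n := by unfold wt; positivity

lemma wt_summable : Summable wt := by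
  have h : Summable (fun n : ℕ => (1 / 2 : ℝ) ^ n) := summable_geometric_two
  apply Summable.of_nat_of_neg
  · refine h.congr fun n => ?_
    simp [wt]
  · refine h.congr fun n => ?_
    simp [wt]

lemma abs_sub_I (a b : unitInterval) : |(a : ℝ) - b| ≤ 1 := by
  rw [abs_le]
  constructor <;> linarith [a.2.1, a.2.2, b.2.1, b.2.2]

lemma term_summable (x y : QX) : Summable (fun n : ℤ => wt n * |(x n : ℝ) - (y n : ℝ)|) := by
  refine Summable.of_nonneg_of_le (fun n => mul_nonneg (wt_pos n).le (abs_nonneg _))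
    (fun n => ?_) wt_summable
  exact mul_le_of_le_one_right (wt_pos n).le (abs_sub_I _ _)

def HM (m : MetricSpace QX) : Prop := ∀ x y : QX,
  dist x y = ∑' n : ℤ, wt n * |(x n : ℝ) - (y n : ℝ)|

lemma abs_le_dist (m : MetricSpace QX) (hm : HM m) (x y : QX) :
    |(x 0 : ℝ) - y 0| ≤ dist x y := by
  rw [hm]
  have := (term_summable x y).le_tsum 0 (fun j _ => mul_nonneg (wt_pos j).le (abs_nonneg _))
  simpa [wt] using this

lemma dist_le_S (m : MetricSpace QX) (hm : HM m) (x y : QX) : dist x y ≤ ∑' n, wt n := by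
  rw [hm]
  exact (term_summable x y).tsum_le_tsum
    (fun n => mul_le_of_le_one_right (wt_pos n).le (abs_sub_I _ _)) wt_summable

def code (K : ℕ) (t : unitInterval) : Fin (K + 1) :=
  ⟨⌊(t : ℝ) * K⌋₊, by
    have : ⌊(t : ℝ) * K⌋₊ ≤ K := by
      apply Nat.floor_le_of_le
      exact mul_le_of_le_one_left (by positivity) t.2.2
    omega⟩

lemma code_close (K : ℕ) (hK : 0 < K) (s t : unitInterval) (h : code K s = code K t) :
    |(s : ℝ) - t| ≤ 1 / K := by
  have h' : ⌊(s : ℝ) * K⌋₊ = ⌊(t : ℝ) * K⌋₊ := by simpa [code] using h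
  have hK' : (0 : ℝ) < K := by exact_mod_cast hK
  have h1 := Nat.floor_le (a := (s : ℝ) * K) (mul_nonneg s.2.1 hK'.le)
  have h2 := Nat.floor_le (a := (t : ℝ) * K) (mul_nonneg t.2.1 hK'.le)
  have h3 := Nat.lt_floor_add_one ((s : ℝ) * K)
  have h4 := Nat.lt_floor_add_one ((t : ℝ) * K)
  rw [h'] at h1 h3
  rw [le_div_iff₀ hK', ← abs_of_pos hK', ← abs_mul, abs_le]
  constructor <;> nlinarith

lemma code_meas (K : ℕ) : Measurable (code K) := by
  apply measurable_to_countable'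
  intro c
  have : code K ⁻¹' {c} = (fun t : unitInterval => ⌊(t : ℝ) * K⌋₊) ⁻¹' {c.1} := by
    ext t
    simp [code, Fin.ext_iff]
  rw [this]
  exact (Nat.measurable_floor.comp (by fun_prop)) (measurableSet_singleton _)

lemma grid (m : MetricSpace QX) (hm : HM m) : ∃ C : ℝ, 0 < C ∧ ∀ ε : ℝ, 0 < ε → ε < 1 →
    ∃ K M : ℕ, ((K : ℝ) + 1) ≤ C / ε ∧ ∀ x y : QX,
      (∀ i ∈ Finset.Icc (-M : ℤ) M, code K (x i) = code K (y i)) → dist x y ≤ ε / 2 := by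
  set S := ∑' n, wt n with hS
  have hS0 : 0 < S := wt_summable.tsum_pos (fun i => (wt_pos i).le) 0 (wt_pos 0)
  refine ⟨4 * S + 2, by positivity, fun ε h0 h1 => ?_⟩
  set K := ⌈4 * S / ε⌉₊ with hK
  have hKpos : 0 < K := Nat.ceil_pos.2 (by positivity)
  have hK1 : 4 * S / ε ≤ K := Nat.le_ceil _
  have hK2 : (K : ℝ) < 4 * S / ε + 1 := Nat.ceil_lt_add_one (by positivity)
  have ht := tendsto_tsum_compl_atTop_zero wt
  have hev := (ht.eventually (gt_mem_nhds (show (0 : ℝ) < ε / 4 by positivity)))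
  obtain ⟨s0, hs0⟩ := eventually_atTop.1 hev
  obtain ⟨M, hM⟩ : ∃ M : ℕ, s0 ⊆ Finset.Icc (-M : ℤ) M := by
    refine ⟨∑ i ∈ s0, i.natAbs, fun i hi => ?_⟩
    have : i.natAbs ≤ ∑ i ∈ s0, i.natAbs :=
      Finset.single_le_sum (f := fun i : ℤ => i.natAbs) (fun _ _ => Nat.zero_le _) hi
    rw [Finset.mem_Icc]
    generalize ∑ i ∈ s0, i.natAbs = z at this
    omega
  refine ⟨K, M, ?_, fun x y hxy => ?_⟩
  · rw [le_div_iff₀ h0]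
    have : (K : ℝ) * ε < 4 * S + ε := by
      calc (K : ℝ) * ε < (4 * S / ε + 1) * ε := by gcongr
        _ = 4 * S + ε := by field_simp
    nlinarith
  · have htail := hs0 _ hM
    set s := Finset.Icc (-M : ℤ) M
    rw [hm, ← (term_summable x y).sum_add_tsum_compl (s := s)]
    have hK' : (0 : ℝ) < K := by exact_mod_cast hKpos
    have e1 : ∑ n ∈ s, wt n * |(x n : ℝ) - (y n : ℝ)| ≤ S * (1 / K) := by
      calc _ ≤ ∑ n ∈ s, wt n * (1 / K) := by
            apply Finset.sum_le_sum
            intro i hi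
            exact mul_le_mul_of_nonneg_left (code_close K hKpos _ _ (hxy i hi)) (wt_pos i).le
        _ = (∑ n ∈ s, wt n) * (1 / K) := by rw [Finset.sum_mul]
        _ ≤ _ := by
            apply mul_le_mul_of_nonneg_right _ (by positivity)
            exact wt_summable.sum_le_tsum s (fun i _ => (wt_pos i).le)
    have e2 : ∑' n : ↑((s : Set ℤ)ᶜ), wt n * |(x n : ℝ) - (y n : ℝ)| ≤ ε / 4 := by
      refine le_trans ?_ htail.le
      exact ((term_summable x y).subtype _).tsum_le_tsum
        (fun n => mul_le_of_le_one_right (wt_pos n).le (abs_sub_I _ _)) (wt_summable.subtype _)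
    have e3 : S * (1 / K) ≤ ε / 4 := by
      rw [mul_one_div, div_le_iff₀ hK']
      rw [div_le_iff₀ h0] at hK1
      linarith
    linarith

def HP (μ : Measure QX) : Prop :=
  ∀ (J : Finset ℤ) (a b : ℤ → ℝ), (∀ n ∈ J, 0 ≤ a n ∧ a n ≤ b n ∧ b n ≤ 1) →
      μ {x : ℤ → unitInterval | ∀ n ∈ J, (x n : ℝ) ∈ Set.Icc (a n) (b n)}
        = ∏ n ∈ J, ENNReal.ofReal (b n - a n)

lemma box_le (μ : Measure QX) (hμ : HP μ) (n : ℕ) (a : QX) (ε : ℝ) (hε : 0 < ε) :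
    μ {x | ∀ j : ℕ, j < n → |(x j : ℝ) - a j| ≤ ε} ≤ ENNReal.ofReal ((2 * ε) ^ n) := by
  have h := hμ (Finset.Ico 0 n) (fun i => max 0 (a i - ε)) (fun i => min 1 (a i + ε)) (by
    intro i _
    have h0 := (a i).2.1
    have h1 := (a i).2.2
    refine ⟨le_max_left _ _, ?_, min_le_left _ _⟩
    rw [max_le_iff, le_min_iff, le_min_iff]
    refine ⟨⟨?_, ?_⟩, ?_, ?_⟩ <;> linarith)
  calc _ ≤ μ {x : ℤ → unitInterval | ∀ i ∈ Finset.Ico (0 : ℤ) n,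
            (x i : ℝ) ∈ Set.Icc (max 0 ((a i : ℝ) - ε)) (min 1 (a i + ε))} := by
        apply measure_mono
        intro x hx i hi
        rw [Finset.mem_Ico] at hi
        lift i to ℕ using hi.1
        have := hx i (by omega)
        rw [abs_le] at this
        refine ⟨max_le (x i).2.1 (by linarith), le_min (x i).2.2 (by linarith)⟩
    _ = _ := h
    _ ≤ ∏ i ∈ Finset.Ico (0 : ℤ) n, ENNReal.ofReal (2 * ε) := by
        apply Finset.prod_le_prod'
        intro i _
        apply ENNReal.ofReal_le_ofReal
        linarith [le_max_right 0 ((a i : ℝ) - ε), min_le_right 1 ((a i : ℝ) + ε)]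
    _ = _ := by
        rw [Finset.prod_const, ENNReal.ofReal_pow (by positivity)]
        simp

/-- squeeze -/
lemma squeeze (F : ℝ → ℝ≥0∞) (C : ℝ) (hC : 0 < C)
    (h1 : ∀ ε, 0 < ε → ε < 1 / 2 → ENNReal.ofReal (Real.log (1 / (2 * ε))) ≤ F ε)
    (h2 : ∀ ε, 0 < ε → ε < 1 / 2 → F ε ≤ ENNReal.ofReal (Real.log (C / ε))) :
    Tendsto (fun ε : ℝ => F ε / ENNReal.ofReal (Real.log (1 / ε)))
      (nhdsWithin 0 (Set.Ioi 0)) (nhds 1) := by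
  have hL : Tendsto (fun ε : ℝ => Real.log (1 / ε)) (nhdsWithin 0 (Set.Ioi 0)) atTop := by
    apply Real.tendsto_log_atTop.comp
    exact (tendsto_inv_nhdsGT_zero (𝕜 := ℝ)).congr (fun x => (one_div x).symm)
  have key : ∀ c : ℝ, Tendsto (fun ε : ℝ => ENNReal.ofReal ((Real.log (1 / ε) + c) / Real.log (1 / ε)))
      (nhdsWithin 0 (Set.Ioi 0)) (nhds 1) := by
    intro c
    rw [← ENNReal.ofReal_one]
    apply ENNReal.tendsto_ofReal
    have : Tendsto (fun L : ℝ => (L + c) / L) atTop (𝓝 1) := by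
      have h : Tendsto (fun L : ℝ => 1 + c / L) atTop (𝓝 (1 + 0)) :=
        tendsto_const_nhds.add (tendsto_const_nhds.div_atTop tendsto_id)
      rw [add_zero] at h
      refine h.congr' ?_
      filter_upwards [eventually_gt_atTop 0] with L hL
      field_simp
    exact this.comp hL
  have hev : ∀ᶠ ε : ℝ in nhdsWithin 0 (Set.Ioi 0), 0 < ε ∧ ε < 1 / 2 :=
    Ioo_mem_nhdsGT (by norm_num)
  refine tendsto_of_tendsto_of_tendsto_of_le_of_le' (key (-Real.log 2)) (key (Real.log C)) ?_ ?_
  · filter_upwards [hev, hL.eventually_gt_atTop 0] with ε hε hl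
    rw [ENNReal.ofReal_div_of_pos hl]
    gcongr
    refine le_trans (le_of_eq ?_) (h1 ε hε.1 hε.2)
    rw [one_div, one_div, Real.log_inv, Real.log_inv, Real.log_mul (by norm_num) hε.1.ne']
    congr 1; ring
  · filter_upwards [hev, hL.eventually_gt_atTop 0] with ε hε hl
    rw [ENNReal.ofReal_div_of_pos hl]
    gcongr
    refine le_trans (h2 ε hε.1 hε.2) (le_of_eq ?_)
    rw [one_div, Real.log_inv, Real.log_div hC.ne' hε.1.ne']
    congr 1; ring

lemma limsup_bound (u : ℕ → ℝ≥0∞) (M : ℕ) (L : ℝ) 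
    (h : ∀ n, 0 < n → u n ≤ ENNReal.ofReal ((n + 2 * M : ℕ) * L)) :
    limsup (fun n : ℕ => u n / (n : ℝ≥0∞)) atTop ≤ ENNReal.ofReal L := by
  have ht : Tendsto (fun n : ℕ => ENNReal.ofReal (L + (2 * M * L) / n)) atTop
      (𝓝 (ENNReal.ofReal L)) := by
    apply ENNReal.tendsto_ofReal
    have h : Tendsto (fun n : ℕ => L + (2 * M * L) / (n : ℝ)) atTop (𝓝 (L + 0)) :=
      tendsto_const_nhds.add (tendsto_const_nhds.div_atTop tendsto_natCast_atTop_atTop)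
    rwa [add_zero] at h
  rw [← ht.limsup_eq]
  refine limsup_le_limsup ?_
  filter_upwards [eventually_gt_atTop 0] with n hn
  have hn' : (0 : ℝ) < n := by exact_mod_cast hn
  have : L + (2 * M * L) / n = ((n + 2 * M : ℕ) * L) / n := by
    push_cast
    field_simp
  rw [this, ENNReal.ofReal_div_of_pos hn', ENNReal.ofReal_natCast]
  gcongr
  exact h n hn

lemma entP_lower (μ : Measure QX) [IsProbabilityMeasure μ] (Q : Finset (Set QX))
    (hcov : ⋃₀ (Q : Set (Set QX)) = Set.univ) (q : ℝ) (hq : 0 < q)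
    (hQ : ∀ A ∈ Q, μ A ≤ ENNReal.ofReal q) :
    ENNReal.ofReal (-Real.log q) ≤ entP μ Q := by
  have h1 : 1 ≤ ∑ A ∈ Q, μ A := by
    rw [← measure_univ (μ := μ), ← hcov, Set.sUnion_eq_biUnion]
    exact measure_biUnion_finset_le Q (fun A => A)
  calc ENNReal.ofReal (-Real.log q) = 1 * ENNReal.ofReal (-Real.log q) := (one_mul _).symm
    _ ≤ (∑ A ∈ Q, μ A) * ENNReal.ofReal (-Real.log q) := by gcongr
    _ = ∑ A ∈ Q, μ A * ENNReal.ofReal (-Real.log q) := Finset.sum_mul _ _ _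
    _ ≤ entP μ Q := by
      apply Finset.sum_le_sum
      intro A hA
      rw [← ENNReal.ofReal_toReal (measure_ne_top μ A), ← ENNReal.ofReal_mul ENNReal.toReal_nonneg,
        ENNReal.toReal_ofReal ENNReal.toReal_nonneg]
      apply ENNReal.ofReal_le_ofReal
      have hle : (μ A).toReal ≤ q := by
        have := ENNReal.toReal_mono ENNReal.ofReal_ne_top (hQ A hA)
        rwa [ENNReal.toReal_ofReal hq.le] at this
      rcases (ENNReal.toReal_nonneg (a := μ A)).eq_or_lt with h | h
      · rw [← h]; simp
      · have := Real.log_le_log h hle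
        nlinarith

lemma entP_upper (μ : Measure QX) [IsProbabilityMeasure μ] (Q : Finset (Set QX))
    {C : Type*} [Fintype C] [MeasurableSpace C] [MeasurableSingletonClass C]
    (q : QX → C) (hq : Measurable q)
    (hQ : ∀ A ∈ Q, A.Nonempty → ∃ c, A = q ⁻¹' {c}) :
    entP μ Q ≤ ENNReal.ofReal (Real.log (Fintype.card C)) := by
  classical
  set f : Set QX → ℝ := fun A => -((μ A).toReal * Real.log ((μ A).toReal)) with hf
  have hp1 : ∀ A, (μ A).toReal ≤ 1 := fun A => by
    have := ENNReal.toReal_mono ENNReal.one_ne_top (prob_le_one (μ := μ) (s := A))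
    simpa using this
  have hf0 : ∀ A, 0 ≤ f A := fun A => by
    have := Real.log_nonpos (ENNReal.toReal_nonneg (a := μ A)) (hp1 A)
    have := ENNReal.toReal_nonneg (a := μ A)
    simp only [hf]
    nlinarith
  have hsum : ∑ c, (μ (q ⁻¹' {c})).toReal = 1 := by
    rw [← ENNReal.toReal_sum (fun c _ => measure_ne_top _ _)]
    rw [sum_measure_preimage_singleton _ (fun c _ => hq (measurableSet_singleton c))]
    simp
  have hne : Nonempty C := ⟨q 0⟩
  have hN : (0 : ℝ) < Fintype.card C := by exact_mod_cast Fintype.card_pos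
  calc entP μ Q = ∑ A ∈ Q, ENNReal.ofReal (f A) := rfl
    _ = ∑ A ∈ Q with A.Nonempty, ENNReal.ofReal (f A) := by
        rw [Finset.sum_filter]
        apply Finset.sum_congr rfl
        intro A _
        split_ifs with h
        · rfl
        · rw [Set.not_nonempty_iff_eq_empty.1 h]
          simp [hf]
    _ ≤ ∑ A ∈ Finset.univ.image (fun c => q ⁻¹' {c}), ENNReal.ofReal (f A) := by
        apply Finset.sum_le_sum_of_subset
        intro A hA
        rw [Finset.mem_filter] at hA
        obtain ⟨c, hc⟩ := hQ A hA.1 hA.2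
        exact Finset.mem_image.2 ⟨c, Finset.mem_univ _, hc.symm⟩
    _ ≤ ∑ c, ENNReal.ofReal (f (q ⁻¹' {c})) :=
        Finset.sum_image_le_of_nonneg (f := fun A => ENNReal.ofReal (f A)) (fun _ _ => by simp)
    _ = ENNReal.ofReal (∑ c, f (q ⁻¹' {c})) :=
        (ENNReal.ofReal_sum_of_nonneg (fun c _ => hf0 _)).symm
    _ ≤ _ := by
        apply ENNReal.ofReal_le_ofReal
        have : ∀ c, f (q ⁻¹' {c}) ≤ (μ (q ⁻¹' {c})).toReal * Real.log (Fintype.card C)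
            + (1 / Fintype.card C - (μ (q ⁻¹' {c})).toReal) := by
          intro c
          simp only [hf]
          rcases (ENNReal.toReal_nonneg (a := μ (q ⁻¹' {c}))).eq_or_lt with h | h
          · rw [← h]; simp
          · generalize (μ (q ⁻¹' {c})).toReal = p at h
            have h3 := Real.log_le_sub_one_of_pos (x := 1 / (p * Fintype.card C)) (by positivity)
            rw [one_div, Real.log_inv, Real.log_mul h.ne' hN.ne'] at h3
            have h4 := mul_le_mul_of_nonneg_left h3 h.le
            have h5 : p * ((p * (Fintype.card C : ℝ))⁻¹ - 1) = 1 / Fintype.card C - p := by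
              field_simp
            rw [h5] at h4
            linarith
        refine (Finset.sum_le_sum (fun c _ => this c)).trans (le_of_eq ?_)
        rw [Finset.sum_add_distrib, ← Finset.sum_mul, Finset.sum_sub_distrib, hsum]
        simp [hN.ne']

/-- coding map -/
def cod (K : ℕ) (W : Finset ℤ) (x : QX) : W → Fin (K + 1) := fun i => code K (x i)

lemma cod_meas (K : ℕ) (W : Finset ℤ) : Measurable (cod K W) := by
  apply measurable_pi_lambda
  intro i
  exact (code_meas K).comp (measurable_pi_apply _)

lemma cod_eq (K : ℕ) (W : Finset ℤ) (x y : QX) :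
    cod K W x = cod K W y ↔ ∀ i ∈ W, code K (x i) = code K (y i) := by
  simp [cod, funext_iff]

lemma card_cod (K M n : ℕ) :
    Real.log (Fintype.card ((Finset.Ico (-M : ℤ) (n + M)) → Fin (K + 1))) =
      (n + 2 * M : ℕ) * Real.log (K + 1) := by
  have : ((n + M : ℤ) - -M).toNat = n + 2 * M := by omega
  rw [Fintype.card_fun, Fintype.card_fin, Fintype.card_coe, Int.card_Ico, this]
  push_cast
  rw [Real.log_pow]
  push_cast
  ring

section
variable (m : MetricSpace QX) (hm : HM m)

lemma bowen_coord (hm : HM m) (n : ℕ) (x y : QX) (j : ℕ) (hj : j < n) :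
    |(x j : ℝ) - y j| ≤ bowenDist shf n x y := by
  have h1 := abs_le_dist m hm (shf^[j] x) (shf^[j] y)
  rw [shf_iter, shf_iter, zero_add] at h1
  refine h1.trans ?_
  exact le_ciSup (f := fun j : Fin n => dist (shf^[(j : ℕ)] x) (shf^[(j : ℕ)] y))
    (Set.finite_range _).bddAbove ⟨j, hj⟩

lemma span_exists (ε : ℝ) (hε : 0 < ε) (K M n : ℕ) (hKM : ∀ x y : QX,
      (∀ i ∈ Finset.Icc (-M : ℤ) M, code K (x i) = code K (y i)) → dist x y ≤ ε / 2) :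
    ∃ E : Finset QX, E.card ≤ Fintype.card ((Finset.Ico (-M : ℤ) (n + M)) → Fin (K + 1)) ∧
      ∀ z ∈ (Set.univ : Set QX), ∃ y ∈ E, bowenDist shf n z y < ε := by
  classical
  set W := Finset.Ico (-M : ℤ) (n + M)
  refine ⟨Finset.univ.image (Function.invFun (cod K W)), Finset.card_image_le, fun z _ => ?_⟩
  refine ⟨Function.invFun (cod K W) (cod K W z), Finset.mem_image_of_mem _ (Finset.mem_univ _), ?_⟩
  set y := Function.invFun (cod K W) (cod K W z)
  have hy : cod K W y = cod K W z := Function.invFun_eq ⟨z, rfl⟩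
  rw [cod_eq] at hy
  refine lt_of_le_of_lt (Real.iSup_le (fun j => hKM _ _ ?_) (by positivity)) (half_lt_self hε)
  intro i hi
  rw [shf_iter, shf_iter]
  refine (hy _ ?_).symm
  have := j.2
  rw [Finset.mem_Icc] at hi
  rw [Finset.mem_Ico]
  omega

lemma spanGrowth_upper (ε : ℝ) (hε : 0 < ε) (K M : ℕ) (hKM : ∀ x y : QX,
      (∀ i ∈ Finset.Icc (-M : ℤ) M, code K (x i) = code K (y i)) → dist x y ≤ ε / 2) :
    spanGrowth shf ε ≤ ENNReal.ofReal (Real.log (K + 1)) := by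
  apply limsup_bound _ M
  intro n _
  obtain ⟨E, hE, hE2⟩ := span_exists m ε hε K M n hKM
  rw [← card_cod]
  apply ENNReal.ofReal_le_ofReal
  have hle : spanNum shf n ε Set.univ ≤ E.card := Nat.sInf_le ⟨E, rfl, hE2⟩
  rcases Nat.eq_zero_or_pos (spanNum shf n ε Set.univ) with h | h
  · rw [h]; simp only [Nat.cast_zero, Real.log_zero]; exact Real.log_natCast_nonneg _
  · apply Real.log_le_log (by exact_mod_cast h)
    exact_mod_cast hle.trans hE

lemma spanGrowth_lower (hm : HM m) (μ : Measure QX) [IsProbabilityMeasure μ] (hμ : HP μ)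
    (ε : ℝ) (hε : 0 < ε) (K M : ℕ) (hKM : ∀ x y : QX,
      (∀ i ∈ Finset.Icc (-M : ℤ) M, code K (x i) = code K (y i)) → dist x y ≤ ε / 2) :
    ENNReal.ofReal (Real.log (1 / (2 * ε))) ≤ spanGrowth shf ε := by
  refine le_trans ?_ (liminf_le_limsup)
  refine le_liminf_of_le (by isBoundedDefault) ?_
  filter_upwards [eventually_gt_atTop 0] with n hn
  have hn' : (0 : ℝ) < n := by exact_mod_cast hn
  obtain ⟨E0, _, hE0⟩ := span_exists m ε hε K M n hKM
  obtain ⟨E, hEc, hE⟩ : spanNum shf n ε Set.univ ∈ {k | ∃ E : Finset QX, E.card = k ∧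
      ∀ z ∈ (Set.univ : Set QX), ∃ y ∈ E, bowenDist shf n z y < ε} :=
    Nat.sInf_mem ⟨_, E0, rfl, hE0⟩
  rw [← hEc]
  have h1 : (1 : ℝ≥0∞) ≤ ENNReal.ofReal (E.card * (2 * ε) ^ n) := by
    calc (1 : ℝ≥0∞) = μ Set.univ := measure_univ.symm
      _ ≤ μ (⋃ y ∈ E, {x | ∀ j : ℕ, j < n → |(x j : ℝ) - y j| ≤ ε}) := by
          apply measure_mono
          intro z hz
          obtain ⟨y, hy, hzy⟩ := hE z hz
          simp only [Set.mem_iUnion]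
          exact ⟨y, hy, fun j hj => (bowen_coord m hm n z y j hj).trans hzy.le⟩
      _ ≤ ∑ y ∈ E, μ {x | ∀ j : ℕ, j < n → |(x j : ℝ) - y j| ≤ ε} :=
          measure_biUnion_finset_le _ _
      _ ≤ ∑ y ∈ E, ENNReal.ofReal ((2 * ε) ^ n) :=
          Finset.sum_le_sum (fun y _ => box_le μ hμ n y ε hε)
      _ = _ := by
          rw [Finset.sum_const, nsmul_eq_mul, ENNReal.ofReal_mul (by positivity),
            ENNReal.ofReal_natCast]
  rw [ENNReal.one_le_ofReal] at h1
  have hc : 0 < (E.card : ℝ) := by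
    by_contra hcon
    have : (E.card : ℝ) = 0 := le_antisymm (not_lt.1 hcon) (by positivity)
    rw [this] at h1
    norm_num at h1
  have h2 := Real.log_nonneg h1
  rw [Real.log_mul hc.ne' (by positivity), Real.log_pow] at h2
  rw [← ENNReal.ofReal_natCast n, ← ENNReal.ofReal_div_of_pos hn']
  apply ENNReal.ofReal_le_ofReal
  rw [le_div_iff₀ hn', one_div, Real.log_inv]
  linarith

lemma join_cover (P : Finset (Set QX)) (hP : IsFinPartition P) (n : ℕ) :
    ⋃₀ (joinN shf P n : Set (Set QX)) = Set.univ := by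
  classical
  rw [Set.eq_univ_iff_forall]
  intro x
  have : ∀ y : QX, ∃ s ∈ P, y ∈ s := by
    intro y
    have : y ∈ ⋃₀ (P : Set (Set QX)) := by rw [hP.2.2]; trivial
    simpa using this
  choose g hg hg2 using this
  refine ⟨⋂ j : Fin n, shf^[(j : ℕ)] ⁻¹' (g (shf^[(j : ℕ)] x)), ?_, ?_⟩
  · simp only [joinN, Finset.mem_coe, Finset.mem_image, Fintype.mem_piFinset]
    exact ⟨fun j => g (shf^[(j : ℕ)] x), fun j => hg _, rfl⟩
  · simp only [Set.mem_iInter, Set.mem_preimage]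
    exact fun j => hg2 _

lemma entRate_lower (hm : HM m) (μ : Measure QX) [IsProbabilityMeasure μ] (hμ : HP μ)
    (ε : ℝ) (hε : 0 < ε) (P : Finset (Set QX)) (hP : IsFinPartition P)
    (hd : ∀ s ∈ P, Metric.diam s ≤ ε) :
    ENNReal.ofReal (Real.log (1 / (2 * ε))) ≤ entRate shf μ P := by
  refine le_liminf_of_le (by isBoundedDefault) ?_
  filter_upwards [eventually_gt_atTop 0] with n hn
  have hn' : (0 : ℝ) < n := by exact_mod_cast hn
  have h := entP_lower μ (joinN shf P n) (join_cover P hP n) ((2 * ε) ^ n) (by positivity) (by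
    intro A hA
    simp only [joinN, Finset.mem_image, Fintype.mem_piFinset] at hA
    obtain ⟨f, hf, rfl⟩ := hA
    rcases Set.eq_empty_or_nonempty (⋂ j : Fin n, shf^[(j : ℕ)] ⁻¹' f j) with h | ⟨a, ha⟩
    · rw [h]; simp
    · refine le_trans (measure_mono ?_) (box_le μ hμ n a ε hε)
      intro x hx j hj
      rw [Set.mem_iInter] at ha hx
      have h1 := abs_le_dist m hm (shf^[j] x) (shf^[j] a)
      rw [shf_iter, shf_iter, zero_add] at h1
      refine h1.trans (le_trans ?_ (hd _ (hf ⟨j, hj⟩)))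
      refine Metric.dist_le_diam_of_mem (s := f ⟨j, hj⟩) ?_ (hx ⟨j, hj⟩) (ha ⟨j, hj⟩)
      rw [Metric.isBounded_iff]
      exact ⟨_, fun x _ y _ => dist_le_S m hm x y⟩)
  rw [← ENNReal.ofReal_natCast n]
  refine le_trans ?_ (ENNReal.div_le_div_right h _)
  rw [← ENNReal.ofReal_div_of_pos hn']
  apply ENNReal.ofReal_le_ofReal
  rw [le_div_iff₀ hn', one_div, Real.log_inv, Real.log_pow]
  linarith

lemma infEnt_upper (μ : Measure QX) [IsProbabilityMeasure μ]
    (ε : ℝ) (hε : 0 < ε) (K M : ℕ) (hKM : ∀ x y : QX,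
      (∀ i ∈ Finset.Icc (-M : ℤ) M, code K (x i) = code K (y i)) → dist x y ≤ ε / 2) :
    infEntRate shf μ ε ≤ ENNReal.ofReal (Real.log (K + 1)) := by
  classical
  set V := Finset.Icc (-M : ℤ) M
  set P : Finset (Set QX) := Finset.univ.image (fun c => cod K V ⁻¹' {c}) with hPdef
  have hPm : ∀ s ∈ P, ∃ c, s = cod K V ⁻¹' {c} := by
    intro s hs
    obtain ⟨c, _, hc⟩ := Finset.mem_image.1 hs
    exact ⟨c, hc.symm⟩
  have hP : IsFinPartition P := by
    refine ⟨?_, ?_, ?_⟩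
    · intro s hs
      obtain ⟨c, rfl⟩ := hPm s hs
      exact cod_meas K V (measurableSet_singleton c)
    · intro s hs t ht hst
      obtain ⟨c, rfl⟩ := hPm s hs
      obtain ⟨d, rfl⟩ := hPm t ht
      apply Disjoint.preimage
      rw [Set.disjoint_singleton]
      rintro rfl
      exact hst rfl
    · rw [Set.eq_univ_iff_forall]
      intro x
      exact ⟨cod K V ⁻¹' {cod K V x}, by simp [hPdef], rfl⟩
  have hd : ∀ s ∈ P, Metric.diam s ≤ ε := by
    intro s hs
    obtain ⟨c, rfl⟩ := hPm s hs
    apply Metric.diam_le_of_forall_dist_le hε.le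
    intro x hx y hy
    refine (hKM x y ?_).trans (by linarith)
    rw [← cod_eq]
    exact (show cod K V x = c from hx).trans (show cod K V y = c from hy).symm
  refine (iInf_le_of_le P (iInf_le_of_le hP (iInf_le_of_le hd ?_)))
  refine le_trans (liminf_le_limsup) ?_
  apply limsup_bound _ M
  intro n hn
  rw [← card_cod]
  apply entP_upper μ _ (cod K (Finset.Ico (-M : ℤ) (n + M))) (cod_meas _ _)
  intro A hA hne
  simp only [joinN, Finset.mem_image, Fintype.mem_piFinset] at hA
  obtain ⟨f, hf, rfl⟩ := hA
  obtain ⟨a, ha⟩ := hne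
  refine ⟨cod K _ a, ?_⟩
  choose c hc using fun j => hPm (f j) (hf j)
  have key : ∀ x, (x ∈ ⋂ j : Fin n, shf^[(j : ℕ)] ⁻¹' f j) ↔
      ∀ j : Fin n, cod K V (shf^[(j : ℕ)] x) = c j := by
    intro x
    rw [Set.mem_iInter]
    apply forall_congr'
    intro j
    rw [hc j]
    rfl
  rw [key] at ha
  ext x
  rw [key, Set.mem_preimage, Set.mem_singleton_iff, cod_eq]
  constructor
  · intro hx k hk
    rw [Finset.mem_Ico] at hk
    have step : ∀ (j : Fin n) (i : ℤ), i ∈ V → code K (x (i + j)) = code K (a (i + j)) := by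
      intro j i hi
      have := (cod_eq K V _ _).1 ((hx j).trans (ha j).symm) i hi
      rwa [shf_iter, shf_iter] at this
    by_cases hkM : k ≤ M
    · have := step ⟨0, hn⟩ k (Finset.mem_Icc.2 ⟨hk.1, hkM⟩)
      simpa using this
    · have := step ⟨(k - M).toNat, by omega⟩ M (Finset.mem_Icc.2 ⟨by omega, le_rfl⟩)
      have e : (M : ℤ) + ((k - M).toNat : ℕ) = k := by omega
      simp only [e] at this
      exact this
  · intro hx j
    rw [← ha j, cod_eq]
    intro i hi
    rw [shf_iter, shf_iter]
    apply hx
    have := j.2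
    rw [Finset.mem_Icc] at hi
    rw [Finset.mem_Ico]
    omega

lemma main_aux (hm : HM m) (μ : Measure QX) [IsProbabilityMeasure μ] (hμ : HP μ) :
    Tendsto (fun ε : ℝ => spanGrowth shf ε / ENNReal.ofReal (Real.log (1 / ε)))
      (nhdsWithin 0 (Set.Ioi 0)) (nhds 1) ∧
    Tendsto (fun ε : ℝ => infEntRate shf μ ε / ENNReal.ofReal (Real.log (1 / ε)))
      (nhdsWithin 0 (Set.Ioi 0)) (nhds 1) := by
  obtain ⟨C, hC, hg⟩ := grid m hm
  constructor
  · apply squeeze _ C hC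
    · intro ε h0 h1
      obtain ⟨K, M, hK, hKM⟩ := hg ε h0 (by linarith)
      exact spanGrowth_lower m hm μ hμ ε h0 K M hKM
    · intro ε h0 h1
      obtain ⟨K, M, hK, hKM⟩ := hg ε h0 (by linarith)
      refine (spanGrowth_upper m ε h0 K M hKM).trans (ENNReal.ofReal_le_ofReal ?_)
      exact Real.log_le_log (by positivity) hK
  · apply squeeze _ C hC
    · intro ε h0 h1
      refine le_iInf fun P => le_iInf fun hP => le_iInf fun hd => ?_
      exact entRate_lower m hm μ hμ ε h0 P hP hd
    · intro ε h0 h1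
      obtain ⟨K, M, hK, hKM⟩ := hg ε h0 (by linarith)
      refine (infEnt_upper m μ ε h0 K M hKM).trans (ENNReal.ofReal_le_ofReal ?_)
      exact Real.log_le_log (by positivity) hK

end


/-- Example: for the shift on `[0,1]^ℤ` with the metric `d(x,y) = Σ_n 2^{-|n|} |x_n - y_n|`
and `μ` the product of Lebesgue measure, the upper and lower metric mean dimensions equal `1`
and the Rényi information dimension of `μ` equals `1`. -/
theorem stmt14 (m : MetricSpace (ℤ → unitInterval))
    (hm : ∀ x y : ℤ → unitInterval,
      @dist _ m.toPseudoMetricSpace.toDist x y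
        = ∑' n : ℤ, (2 : ℝ) ^ (-|n| : ℤ) * |(x n : ℝ) - (y n : ℝ)|)
    (μ : Measure (ℤ → unitInterval)) (hμp : IsProbabilityMeasure μ)
    (hμprod : ∀ (J : Finset ℤ) (a b : ℤ → ℝ), (∀ n ∈ J, 0 ≤ a n ∧ a n ≤ b n ∧ b n ≤ 1) →
      μ {x : ℤ → unitInterval | ∀ n ∈ J, (x n : ℝ) ∈ Set.Icc (a n) (b n)}
        = ∏ n ∈ J, ENNReal.ofReal (b n - a n)) :
    @mdimMUpper _ m.toPseudoMetricSpace (fun x n => x (n + 1)) = 1 ∧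
    @mdimMLower _ m.toPseudoMetricSpace (fun x n => x (n + 1)) = 1 ∧
    Filter.Tendsto (fun ε : ℝ =>
        @infEntRate _ m.toPseudoMetricSpace _ (fun x n => x (n + 1)) μ ε
          / ENNReal.ofReal (Real.log (1 / ε)))
      (nhdsWithin 0 (Set.Ioi 0)) (nhds 1) := by
  obtain ⟨h1, h2⟩ := main_aux m hm μ hμprod
  exact ⟨h1.limsup_eq, h1.liminf_eq, h2⟩
end
end

section
/- Let (X,T) be a topological dynamical system with compatible metric d, and let F be a candidate function such that mdim_M^-(T,X,d) = sup_{μ∈M(X,T)} liminf_{ε→0} F(μ,ε)/log(1/ε), and suppose that for every fixed ε>0 the map μ ↦ F(μ,ε) is concave on M(X,T). If mdim_M^-(T,X,d) = ∞, then M^-_max(T,X,d) is nonempty; more precisely, choosing μ_n ∈ M(X,T) with liminf_{ε→0} F(μ_n,ε)/log(1/ε) > 2^n for each n, the measure μ = Σ_{n=1}^∞ 2^{−n} μ_n satisfies liminf_{ε→0} F(μ,ε)/log(1/ε) = ∞. -/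
open Filter MeasureTheory Set
open scoped ENNReal Topology

noncomputable section

open MMD

namespace MMD

def tailM {X : Type*} [MeasurableSpace X] (μn : ℕ → Measure X) (N : ℕ) : Measure X :=
  Measure.sum (fun n : ℕ => ((2 : ℝ≥0∞)⁻¹) ^ (n + 1) • μn (N + n))

lemma tailM_prob {X : Type*} [MeasurableSpace X] (μn : ℕ → Measure X)
    (h : ∀ n, IsProbabilityMeasure (μn n)) (N : ℕ) : IsProbabilityMeasure (tailM μn N) := by
  constructor
  rw [tailM, Measure.sum_apply _ MeasurableSet.univ]
  simp only [Measure.smul_apply, smul_eq_mul]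
  have : ∀ n, μn n univ = 1 := fun n => (h n).measure_univ
  simp only [this, mul_one]
  rw [ENNReal.tsum_geometric_add_one, ENNReal.one_sub_inv_two, inv_inv]
  exact ENNReal.inv_mul_cancel (by simp) (by simp)

lemma tailM_inv {X : Type*} [MeasurableSpace X] (T : X → X) (hT : Measurable T)
    (μn : ℕ → Measure X)
    (h : ∀ n, MeasurePreserving T (μn n) (μn n)) (N : ℕ) :
    MeasurePreserving T (tailM μn N) (tailM μn N) := by
  refine ⟨hT, ?_⟩
  ext s hs
  rw [Measure.map_apply hT hs, tailM, Measure.sum_apply _ (hT hs), Measure.sum_apply _ hs]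
  refine tsum_congr fun n => ?_
  simp only [Measure.smul_apply, (h (N + n)).measure_preimage hs.nullMeasurableSet]

lemma tailM_succ {X : Type*} [MeasurableSpace X] (μn : ℕ → Measure X) (N : ℕ) :
    tailM μn N = (2 : ℝ≥0∞)⁻¹ • μn N + (2 : ℝ≥0∞)⁻¹ • tailM μn (N + 1) := by
  ext s hs
  rw [Measure.add_apply, Measure.smul_apply, Measure.smul_apply, tailM, tailM,
    Measure.sum_apply _ hs, Measure.sum_apply _ hs, tsum_eq_zero_add' ENNReal.summable]
  simp only [Measure.smul_apply, smul_eq_mul]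
  rw [← ENNReal.tsum_mul_left]
  congr 1
  · simp
  · refine tsum_congr fun n => ?_
    rw [show N + (n + 1) = N + 1 + n by ring, pow_succ' _ (n + 1), mul_assoc]

end MMD

/-- Proposition 3.7 (3), second half: if `F(·,ε)` is concave for every fixed `ε > 0` and
`mdim_M^-(T,X,d) = ∞`, then a maximal lower metric mean dimension measure exists; explicitly,
picking `μ_n` with lower dimension `> 2^n`, the measure `μ = Σ_{n≥1} 2^{-n} μ_n` has lower
dimension `∞`. -/
theorem stmt18 {X : Type*} [MetricSpace X] [CompactSpace X] [MeasurableSpace X] [BorelSpace X]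
    (T : X → X) (hT : Continuous T)
    (F : Measure X → ℝ → ℝ≥0∞) (hF : IsCandidate T F)
    (hlow : mdimMLower T =
      ⨆ (μ : Measure X) (_ : IsProbabilityMeasure μ) (_ : MeasurePreserving T μ μ),
        dimFLower F μ)
    (hconc : ∀ ε : ℝ, 0 < ε → ∀ μ₁ μ₂ : Measure X,
      IsProbabilityMeasure μ₁ → MeasurePreserving T μ₁ μ₁ →
      IsProbabilityMeasure μ₂ → MeasurePreserving T μ₂ μ₂ →
      ∀ p : ℝ, 0 ≤ p → p ≤ 1 →
        ENNReal.ofReal p * F μ₁ ε + ENNReal.ofReal (1 - p) * F μ₂ ε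
          ≤ F (ENNReal.ofReal p • μ₁ + ENNReal.ofReal (1 - p) • μ₂) ε)
    (hinf : mdimMLower T = ∞)
    (μn : ℕ → Measure X)
    (hμnp : ∀ n, IsProbabilityMeasure (μn n)) (hμninv : ∀ n, MeasurePreserving T (μn n) (μn n))
    (hμnbig : ∀ n : ℕ, (2 : ℝ≥0∞) ^ (n + 1) < dimFLower F (μn n))
    (μ : Measure X) (hμ : μ = Measure.sum (fun n : ℕ => ((2 : ℝ≥0∞)⁻¹) ^ (n + 1) • μn n)) :
    dimFLower F μ = ∞ ∧ mdimMLower T = dimFLower F μ := by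
  have hhalf : ENNReal.ofReal (1 / 2 : ℝ) = (2 : ℝ≥0∞)⁻¹ := by
    rw [one_div, ENNReal.ofReal_inv_of_pos (by norm_num)]; simp
  have hhalf' : ENNReal.ofReal (1 - 1 / 2 : ℝ) = (2 : ℝ≥0∞)⁻¹ := by
    rw [← hhalf]; norm_num
  have key : ∀ k N : ℕ, ∀ᶠ ε in 𝓝[>] (0 : ℝ),
      (k : ℝ≥0∞) * 2 ^ N ≤ F (tailM μn N) ε / ENNReal.ofReal (Real.log (1 / ε)) := by
    intro k
    induction k with
    | zero => intro N; simp
    | succ k ih =>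
      intro N
      have h1 := Filter.eventually_lt_of_lt_liminf (hμnbig N)
      filter_upwards [h1, ih (N + 1), self_mem_nhdsWithin] with ε h1 h2 hε
      have hc := hconc ε hε (μn N) (tailM μn (N + 1)) (hμnp N) (hμninv N)
        (tailM_prob μn hμnp _) (tailM_inv T hT.measurable μn hμninv _) (1 / 2)
        (by norm_num) (by norm_num)
      rw [hhalf, hhalf', ← tailM_succ] at hc
      refine le_trans ?_ (ENNReal.div_le_div_right hc _)
      rw [ENNReal.add_div, mul_div_assoc, mul_div_assoc]
      refine le_trans ?_ (add_le_add (mul_le_mul_right h1.le _) (mul_le_mul_right h2 _))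
      have h3 : (2 : ℝ≥0∞)⁻¹ * 2 = 1 := ENNReal.inv_mul_cancel (by simp) (by simp)
      apply le_of_eq
      calc ((k + 1 : ℕ) : ℝ≥0∞) * 2 ^ N = (2⁻¹ * 2) * (((k + 1 : ℕ) : ℝ≥0∞) * 2 ^ N) := by
            rw [h3, one_mul]
        _ = _ := by push_cast; ring
  have hμ0 : μ = tailM μn 0 := by rw [hμ, tailM]; simp
  have htop : dimFLower F μ = ∞ := by
    refine ENNReal.eq_top_of_forall_nnreal_le fun r => ?_
    obtain ⟨k, hk⟩ := exists_nat_ge r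
    refine le_trans (b := (k : ℝ≥0∞)) (by exact_mod_cast hk) ?_
    refine Filter.le_liminf_of_le (by isBoundedDefault) ?_
    rw [hμ0]
    simpa using key k 0
  exact ⟨htop, hinf.trans htop.symm⟩
end
end
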